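/- arXiv:2512.16942 — 2 statements merged into one kernel-verified Lean document; each statement's English description precedes it below -/
import Mathlib

section
/- Let q be a prime power with q > 2809. Then for every integer n with 1 < n < q and (n-1) dividing (q-1), not every element of F_q is the sum of a 5-potent element and an n-potent element, i.e., C_5 + C_n is a proper subset of F_q. -/
open Polynomial

/-- The naive height of a rational function: its degree as a map to the projective line. -/
noncomputable def RatFunc.height {F : Type*} [Field F] (u : RatFunc F) : ℕ :=
  max u.num.natDegree u.denom.natDegree

theorem RatFunc.height_div_add_natDegree_le {F : Type*} [Field F] {U V G : F[X]} (hV : V ≠ 0)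
    (hU : G ∣ U) (hGV : G ∣ V) :
    (algebraMap F[X] (RatFunc F) U / algebraMap F[X] (RatFunc F) V).height + G.natDegree ≤
      max U.natDegree V.natDegree := by
  set u := algebraMap F[X] (RatFunc F) U / algebraMap F[X] (RatFunc F) V with hu
  have hinj := IsFractionRing.injective F[X] (RatFunc F)
  have hV' : algebraMap F[X] (RatFunc F) V ≠ 0 := by
    simpa using hV
  have hd' : algebraMap F[X] (RatFunc F) u.denom ≠ 0 := by
    simpa using u.denom_ne_zero
  have key : U * u.denom = u.num * V := by
    apply hinj
    rw [map_mul, map_mul]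
    have := RatFunc.num_div_denom u
    rw [hu, div_eq_div_iff hd' hV', ← hu] at this
    exact this.symm
  obtain ⟨c, hc⟩ : u.denom ∣ V :=
    (RatFunc.isCoprime_num_denom u).symm.dvd_of_dvd_mul_left (key ▸ dvd_mul_left _ _)
  have hUc : U = u.num * c := by
    apply mul_right_cancel₀ u.denom_ne_zero
    rw [key]; nth_rewrite 1 [hc]; ring
  have hc0 : c ≠ 0 := by rintro rfl; simp at hc; exact hV hc
  have hGc : G ∣ c := by
    obtain ⟨s, t, hst⟩ := RatFunc.isCoprime_num_denom u
    have : c = s * U + t * V := by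
      rw [hUc]; linear_combination (-c) * hst - t * hc
    rw [this]
    exact dvd_add (hU.mul_left _) (hGV.mul_left _)
  have h1 : G.natDegree ≤ c.natDegree := natDegree_le_of_dvd hGc hc0
  have h2 : V.natDegree = u.denom.natDegree + c.natDegree := by
    conv_lhs => rw [hc]
    rw [natDegree_mul u.denom_ne_zero hc0]
  have h3 : u.num.natDegree + c.natDegree ≤ max U.natDegree V.natDegree := by
    by_cases h : u.num = 0
    · rw [h]; simp; right; omega
    · rw [hUc, natDegree_mul h hc0]; simp
  simp only [RatFunc.height]
  omega

theorem RatFunc.height_div_le {F : Type*} [Field F] {U V : F[X]} {d : ℕ} (hV : V ≠ 0)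
    (hU : U.natDegree ≤ d) (hVd : V.natDegree ≤ d) :
    (algebraMap F[X] (RatFunc F) U / algebraMap F[X] (RatFunc F) V).height ≤ d := by
  have := RatFunc.height_div_add_natDegree_le hV (one_dvd U) (one_dvd V)
  omega

theorem RatFunc.height_add_height_le {F : Type*} [Field F] {u v : RatFunc F} {G₀ G₁ G₂ : F[X]}
    {d : ℕ} (h0 : G₀ ≠ 0)
    (hs : (u + v) * algebraMap F[X] (RatFunc F) G₀ = algebraMap F[X] (RatFunc F) G₁)
    (hp : u * v * algebraMap F[X] (RatFunc F) G₀ = algebraMap F[X] (RatFunc F) G₂)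
    (hd0 : G₀.natDegree ≤ d) (hd1 : G₁.natDegree ≤ d) (hd2 : G₂.natDegree ≤ d) :
    u.height + v.height ≤ d := by
  have hinj := IsFractionRing.injective F[X] (RatFunc F)
  have hu0 := u.denom_ne_zero
  have hv0 := v.denom_ne_zero
  have hu0' : algebraMap F[X] (RatFunc F) u.denom ≠ 0 := by simpa using hu0
  have hv0' : algebraMap F[X] (RatFunc F) v.denom ≠ 0 := by simpa using hv0
  have hu := RatFunc.num_div_denom u
  have hv := RatFunc.num_div_denom v
  obtain ⟨s, t, hst⟩ := RatFunc.isCoprime_num_denom u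
  obtain ⟨s', t', hst'⟩ := RatFunc.isCoprime_num_denom v
  simp only [RatFunc.height]
  set N := u.num
  set D := u.denom
  set N' := v.num
  set D' := v.denom
  have e2 : N * N' * G₀ = G₂ * (D * D') := by
    apply hinj
    simp only [map_mul]
    rw [← hp]
    nth_rewrite 1 [← hu]; nth_rewrite 1 [← hv]
    field_simp
  have e1 : (N * D' + N' * D) * G₀ = G₁ * (D * D') := by
    apply hinj
    simp only [map_mul, map_add]
    rw [← hs]
    nth_rewrite 1 [← hu]; nth_rewrite 1 [← hv]
    field_simp
  have hdvd : D * D' ∣ G₀ := by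
    have hN : D * D' ∣ G₀ * N ^ 2 := by
      refine ⟨s' * N * G₂ + t' * (N * G₁ - D * G₂), ?_⟩
      linear_combination (-G₀ * N ^ 2) * hst' + (s' * N - t' * D) * e2 + (t' * N) * e1
    have hD : D * D' ∣ G₀ * D ^ 2 := by
      refine ⟨t' * D * G₀ + s' * (D * G₁ - N * G₀), ?_⟩
      linear_combination (-G₀ * D ^ 2) * hst' + (s' * D) * e1
    obtain ⟨p, r, hpr⟩ : IsCoprime (N ^ 2) (D ^ 2) := IsCoprime.pow ⟨s, t, hst⟩
    have : G₀ = p * (G₀ * N ^ 2) + r * (G₀ * D ^ 2) := by linear_combination (-G₀) * hpr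
    rw [this]
    exact dvd_add (hN.mul_left _) (hD.mul_left _)
  obtain ⟨c, hc⟩ := hdvd
  have hDD : D * D' ≠ 0 := mul_ne_zero hu0 hv0
  have hc0 : c ≠ 0 := by rintro rfl; simp at hc; exact h0 hc
  have g2 : G₂ = N * N' * c := by
    apply mul_right_cancel₀ hDD
    rw [← e2, hc]; ring
  have g1 : G₁ = (N * D' + N' * D) * c := by
    apply mul_right_cancel₀ hDD
    rw [← e1, hc]; ring
  have a0 : D.natDegree + D'.natDegree ≤ d := by
    rw [hc, natDegree_mul hDD hc0, natDegree_mul hu0 hv0] at hd0; omega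
  have a2 : N ≠ 0 → N' ≠ 0 → N.natDegree + N'.natDegree ≤ d := by
    intro h h'
    rw [g2, natDegree_mul (mul_ne_zero h h') hc0, natDegree_mul h h'] at hd2; omega
  have a1 : ∀ h : N * D' + N' * D ≠ 0, (N * D' + N' * D).natDegree ≤ d := by
    intro h
    rw [g1, natDegree_mul h hc0] at hd1; omega
  have b1 : ∀ {A B A' B' : F[X]}, (A * B' + A' * B ≠ 0 → (A * B' + A' * B).natDegree ≤ d) →
      B ≠ 0 → B' ≠ 0 → B.natDegree < A.natDegree → A'.natDegree ≤ B'.natDegree →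
      A.natDegree + B'.natDegree ≤ d := by
    intro A B A' B' h hB hB' hlt hle
    have hA : A ≠ 0 := by rintro rfl; simp at hlt
    have h3 : (A' * B).natDegree < (A * B').natDegree := by
      rw [natDegree_mul hA hB']
      calc _ ≤ A'.natDegree + B.natDegree := natDegree_mul_le
        _ < _ := by omega
    have h4 := natDegree_add_eq_left_of_natDegree_lt h3
    rw [natDegree_mul hA hB'] at h4
    rw [← h4]
    apply h
    intro h5
    rw [h5] at h4
    simp at h4; omega
  rcases le_or_gt N.natDegree D.natDegree with h | h <;>
    rcases le_or_gt N'.natDegree D'.natDegree with h' | h'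
  · rw [max_eq_right h, max_eq_right h']; exact a0
  · rw [max_eq_right h, max_eq_left h'.le, add_comm]
    exact b1 (by rw [add_comm]; exact a1) hv0 hu0 h' h
  · rw [max_eq_left h.le, max_eq_right h']
    exact b1 a1 hu0 hv0 h h'
  · rw [max_eq_left h.le, max_eq_left h'.le]
    exact a2 (by rintro h; simp [h] at *) (by rintro h; simp [h] at *)

theorem WeierstrassCurve.Affine.addX_add_addX_negY {K : Type*} [Field K] [DecidableEq K]
    {a₂ a₄ a₆ x₁ y₁ x₂ y₂ : K} (hx : x₁ ≠ x₂)
    (h₁ : y₁ ^ 2 = x₁ ^ 3 + a₂ * x₁ ^ 2 + a₄ * x₁ + a₆)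
    (h₂ : y₂ ^ 2 = x₂ ^ 3 + a₂ * x₂ ^ 2 + a₄ * x₂ + a₆)  :
    let W : WeierstrassCurve.Affine K := ⟨0, a₂, 0, a₄, a₆⟩
    (W.addX x₁ x₂ (W.slope x₁ x₂ y₁ y₂) + W.addX x₁ x₂ (W.slope x₁ x₂ y₁ (-y₂))) * (x₁ - x₂) ^ 2 =
      2 * ((x₁ + x₂) * (x₁ * x₂ + a₄) + 2 * a₆ + 2 * a₂ * (x₁ * x₂)) ∧
    (W.addX x₁ x₂ (W.slope x₁ x₂ y₁ y₂) * W.addX x₁ x₂ (W.slope x₁ x₂ y₁ (-y₂))) * (x₁ - x₂) ^ 2 =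
      (x₁ * x₂ - a₄) ^ 2 - 4 * a₆ * (x₁ + x₂ + a₂) := by
  intro W
  have hx' : x₁ - x₂ ≠ 0 := sub_ne_zero.2 hx
  rw [WeierstrassCurve.Affine.slope_of_X_ne hx, WeierstrassCurve.Affine.slope_of_X_ne hx]
  simp only [WeierstrassCurve.Affine.addX, W]
  constructor
  · field_simp
    linear_combination 2 * h₁ + 2 * h₂
  · have h3 : ∀ p q r : K, (p ^ 2 + 0 * p - a₂ - x₁ - x₂) * (q ^ 2 + 0 * q - a₂ - x₁ - x₂) * r =
      (p * q) ^ 2 * r - (p ^ 2 + q ^ 2) * (a₂ + x₁ + x₂) * r + (a₂ + x₁ + x₂) ^ 2 * r := by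
      intros; ring
    rw [h3]
    have h4 : (y₁ - y₂) / (x₁ - x₂) * ((y₁ - -y₂) / (x₁ - x₂)) =
      (x₁ ^ 2 + x₁ * x₂ + x₂ ^ 2 + a₂ * (x₁ + x₂) + a₄) / (x₁ - x₂) := by
      field_simp
      linear_combination h₁ - h₂
    rw [h4]
    have h5 : ((y₁ - y₂) / (x₁ - x₂)) ^ 2 + ((y₁ - -y₂) / (x₁ - x₂)) ^ 2 =
      2 * (x₁ ^ 3 + a₂ * x₁ ^ 2 + a₄ * x₁ + a₆ + (x₂ ^ 3 + a₂ * x₂ ^ 2 + a₄ * x₂ + a₆)) /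
        (x₁ - x₂) ^ 2 := by
      field_simp
      linear_combination 2 * h₁ + 2 * h₂
    rw [h5]
    field_simp
    ring

namespace TwistedCurve

variable {F : Type*} [Field F]

/-- The Weierstrass model of the quadratic twist by `f = X³ + aX² + bX + c`, over `F(X)`,
of the constant curve `y² = f(x)`. -/
noncomputable def curve (a b c : F) : WeierstrassCurve.Affine (RatFunc F) :=
  let l := algebraMap F[X] (RatFunc F) (X ^ 3 + C a * X ^ 2 + C b * X + C c)
  ⟨0, algebraMap F[X] (RatFunc F) (C a) * l, 0, algebraMap F[X] (RatFunc F) (C b) * l ^ 2,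
    algebraMap F[X] (RatFunc F) (C c) * l ^ 3⟩

/-- The height of a point, computed from its abscissa on `f(X) y² = x³ + ax² + bx + c`. -/
noncomputable def height (a b c : F) : (curve a b c).Point → ℕ
  | .zero => 0
  | .some x _ _ =>
    (x / algebraMap F[X] (RatFunc F) (X ^ 3 + C a * X ^ 2 + C b * X + C c)).height

theorem height_neg {a b c : F} (P : (curve a b c).Point) : height a b c (-P) = height a b c P := by
  match P with
  | .zero => rfl
  | .some x y h => rfl

theorem cubic_ne_zero (a b c : F) : (X ^ 3 + C a * X ^ 2 + C b * X + C c : F[X]) ≠ 0 := by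
  intro h
  have := congrArg (fun p => coeff p 3) h
  simp at this

theorem natDegree_cubic (a b c : F) :
    (X ^ 3 + C a * X ^ 2 + C b * X + C c : F[X]).natDegree = 3 := by
  compute_degree!

theorem equation_iff {a b c : F} {x y : RatFunc F} :
    let l := algebraMap F[X] (RatFunc F) (X ^ 3 + C a * X ^ 2 + C b * X + C c)
    (curve a b c).Equation x y ↔ y ^ 2 = x ^ 3 + algebraMap F[X] (RatFunc F) (C a) * l * x ^ 2 +
      algebraMap F[X] (RatFunc F) (C b) * l ^ 2 * x + algebraMap F[X] (RatFunc F) (C c) * l ^ 3 := by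
  intro l
  rw [WeierstrassCurve.Affine.equation_iff]
  simp only [curve, l]
  simp

theorem nonsingular_of {a b c : F} {x y : RatFunc F} (h : (curve a b c).Equation x y)
    (h2 : (2 : F) ≠ 0) (hy : y ≠ 0) : (curve a b c).Nonsingular x y := by
  rw [WeierstrassCurve.Affine.nonsingular_iff]
  refine ⟨h, Or.inr ?_⟩
  simp only [curve]
  intro h'
  have : (2 : RatFunc F) * y = 0 := by linear_combination h'
  have h2' : (2 : RatFunc F) ≠ 0 := by
    have := (map_ne_zero (algebraMap F (RatFunc F))).2 h2
    rwa [map_ofNat] at this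
  exact (mul_ne_zero h2' hy) this

open Classical in
/-- Half of the parallelogram law. -/
theorem height_add_height_sub_le {a b c : F} (h2 : (2 : F) ≠ 0) (P R : (curve a b c).Point)
    {x y : RatFunc F} {h : (curve a b c).Nonsingular x y} (hP : P = .some x y h)
    (hx : x = algebraMap F[X] (RatFunc F) ((X ^ 3 + C a * X ^ 2 + C b * X + C c) * X))
    (hy : y ≠ 0) :
    height a b c (R + P) + height a b c (R - P) ≤ 2 * height a b c R + 2 := by
  set f : F[X] := X ^ 3 + C a * X ^ 2 + C b * X + C c with hf
  set ι := algebraMap F[X] (RatFunc F) with hι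
  have hinj : Function.Injective ι := IsFractionRing.injective F[X] (RatFunc F)
  have hf0 : f ≠ 0 := cubic_ne_zero a b c
  have hl0 : ι f ≠ 0 := by simpa [hι] using hf0
  have hfe : ι f = ι X ^ 3 + ι (C a) * ι X ^ 2 + ι (C b) * ι X + ι (C c) := by
    rw [hf]; simp only [map_add, map_mul, map_pow]
  have h2' : (2 : F[X]) ≠ 0 := by
    have := (map_ne_zero_iff _ (C_injective (R := F))).2 h2
    rwa [map_ofNat] at this
  have h2'' : (2 : RatFunc F) ≠ 0 := by
    have := (map_ne_zero_iff _ hinj).2 h2'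
    rwa [map_ofNat] at this
  have h4 : (4 : F[X]) ≠ 0 := by
    have : (4 : F[X]) = 2 * 2 := by norm_num
    rw [this]; exact mul_ne_zero h2' h2'
  have hxl : x / ι f = ι X := by rw [hx, map_mul]; field_simp
  have hPh : height a b c P = 1 := by
    subst hP
    simp only [height]
    rw [← hf, hxl, hι, RatFunc.algebraMap_X]
    simp [RatFunc.height]
  have hPe := equation_iff.1 h.1
  have hdouble : height a b c (P + P) ≤ 4 := by
    have hyn : y ≠ (curve a b c).negY x y := by
      simp only [WeierstrassCurve.Affine.negY, curve]
      intro h'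
      exact mul_ne_zero h2'' hy (by linear_combination h')
    have e : height a b c (P + P) = ((curve a b c).addX x x ((curve a b c).slope x x y y) /
        ι f).height := by
      subst hP
      rw [WeierstrassCurve.Affine.Point.add_self_of_Y_ne hyn]
      simp only [height]
      rw [← hf]
    rw [e]
    have e2 : (curve a b c).addX x x ((curve a b c).slope x x y y) / ι f =
        ι ((X ^ 2 - C b) ^ 2 - 4 * C c * (2 * X + C a)) / ι (4 * f) := by
      rw [WeierstrassCurve.Affine.slope_of_Y_ne rfl hyn]
      have hy2 : y ^ 2 = ι f ^ 4 := by
        rw [hPe, hx]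
        simp only [map_mul]
        rw [← hf, ← hι]
        linear_combination (-ι f ^ 3) * hfe
      have hyl : y ≠ 0 := hy
      simp only [WeierstrassCurve.Affine.addX, WeierstrassCurve.Affine.negY, curve]
      rw [← hf, ← hι]
      have e3 : ∀ z : RatFunc F, (z / (y - (-y - 0 * x - 0))) ^ 2 + 0 * (z / (y - (-y - 0 * x - 0)))
          = z ^ 2 / (4 * ι f ^ 4) := by
        intro z
        rw [← hy2]
        have : y - (-y - 0 * x - 0) = 2 * y := by ring
        rw [this, div_pow]; ring
      rw [e3, hx]
      have h4' : (4 : RatFunc F) ≠ 0 := by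
        have : (4 : RatFunc F) = 2 * 2 := by norm_num
        rw [this]; exact mul_ne_zero h2'' h2''
      have i4 : ι 4 = 4 := map_ofNat ι 4
      have i2 : ι 2 = 2 := map_ofNat ι 2
      simp only [map_mul, map_sub, map_add, map_pow, i4, i2]
      field_simp
      rw [hfe]
      ring
    rw [e2]
    apply RatFunc.height_div_le (mul_ne_zero h4 hf0)
    · compute_degree
    · rw [hf]; compute_degree; norm_num
  match R with
  | .zero =>
    rw [← WeierstrassCurve.Affine.Point.zero_def, zero_add, zero_sub, height_neg, hPh]
    omega
  | .some x₁ y₁ h₁ =>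
    have hRe := equation_iff.1 h₁.1
    by_cases hxx : x₁ = x
    · have : WeierstrassCurve.Affine.Point.some x₁ y₁ h₁ = P ∨
        WeierstrassCurve.Affine.Point.some x₁ y₁ h₁ = -P := by
        rw [hP]; exact WeierstrassCurve.Affine.Point.X_eq_iff.1 hxx
      rcases this with h' | h'
      · rw [h', sub_self, hPh]
        simp only [show height a b c 0 = 0 from rfl]
        omega
      · rw [h', neg_add_cancel, height_neg, hPh, show -P - P = -(P + P) by abel, height_neg]
        simp only [show height a b c 0 = 0 from rfl]
        omega
    · have hneg : -P = .some x (-y) (by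
          have := (WeierstrassCurve.Affine.nonsingular_neg (W' := curve a b c) x y).2 h
          simpa [WeierstrassCurve.Affine.negY, curve] using this) := by
        subst hP
        rw [WeierstrassCurve.Affine.Point.neg_some]
        congr 1
        simp [WeierstrassCurve.Affine.negY, curve]
      obtain ⟨hs, hp⟩ := WeierstrassCurve.Affine.addX_add_addX_negY hxx hRe hPe
      rw [sub_eq_add_neg, hneg, hP, WeierstrassCurve.Affine.Point.add_of_X_ne hxx,
        WeierstrassCurve.Affine.Point.add_of_X_ne hxx]
      simp only [height]
      rw [← hf, ← hι]
      rw [← hf, ← hι] at hs hp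
      have hcurve : (⟨0, ι (C a) * ι f, 0, ι (C b) * ι f ^ 2, ι (C c) * ι f ^ 3⟩ :
        WeierstrassCurve.Affine (RatFunc F)) = curve a b c := by
        simp only [curve]; rfl
      rw [hcurve] at hs hp
      set u := (curve a b c).addX x₁ x ((curve a b c).slope x₁ x y₁ y)
      set v := (curve a b c).addX x₁ x ((curve a b c).slope x₁ x y₁ (-y))
      set w := x₁ / ι f with hw
      have hx₁ : x₁ = w * ι f := by rw [hw]; field_simp
      have hw' := RatFunc.num_div_denom w
      set N := w.num
      set D := w.denom with hD
      have hD0 : D ≠ 0 := RatFunc.denom_ne_zero w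
      have hD0' : ι D ≠ 0 := by simpa [hι] using hD0
      have hxx' : N - X * D ≠ 0 := by
        intro h0
        apply hxx
        rw [hx₁, hx, ← hw', ← hι, sub_eq_zero.1 h0]
        simp only [map_mul]
        field_simp
      have hwN : ι N = w * ι D := by rw [← hw', ← hι]; field_simp
      have hNd : N.natDegree ≤ w.height := le_max_left _ _
      have hDd : D.natDegree ≤ w.height := le_max_right _ _
      have i2 : ι 2 = 2 := map_ofNat ι 2
      have i4 : ι 4 = 4 := map_ofNat ι 4
      rw [hx₁, hx] at hs hp
      simp only [map_mul] at hs hp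
      refine RatFunc.height_add_height_le (G₀ := (N - X * D) ^ 2)
        (G₁ := 2 * ((N + X * D) * (N * X + C b * D) + 2 * C c * D ^ 2 + 2 * C a * (N * X * D)))
        (G₂ := (N * X - C b * D) ^ 2 - 4 * C c * (N + X * D + C a * D) * D)
        (pow_ne_zero _ hxx') ?_ ?_ ?_ ?_ ?_
      · rw [← hι]
        simp only [map_mul, map_sub, map_add, map_pow, i2, hwN]
        field_simp
        apply mul_right_cancel₀ (pow_ne_zero 2 hl0)
        linear_combination hs
      · rw [← hι]
        simp only [map_mul, map_sub, map_add, map_pow, i4, hwN]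
        field_simp
        apply mul_right_cancel₀ (pow_ne_zero 2 hl0)
        linear_combination hp
      · have : (N - X * D).natDegree ≤ w.height + 1 := by
          compute_degree
          omega
        calc _ ≤ 2 * (w.height + 1) := natDegree_pow_le_of_le 2 this
          _ = _ := by ring
      · have h3 : (N + X * D).natDegree ≤ w.height + 1 := by compute_degree; omega
        have h4 : (N * X + C b * D).natDegree ≤ w.height + 1 := by compute_degree; omega
        have h5 : (D ^ 2).natDegree ≤ 2 * w.height := natDegree_pow_le_of_le 2 hDd
        have h6 : (N * X * D).natDegree ≤ w.height + 1 + w.height :=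
          natDegree_mul_le_of_le (natDegree_mul_le_of_le hNd natDegree_X_le) hDd
        have h7 := natDegree_mul_le_of_le h3 h4
        have e : 2 * ((N + X * D) * (N * X + C b * D) + 2 * C c * D ^ 2 + 2 * C a * (N * X * D)) =
          C 2 * ((N + X * D) * (N * X + C b * D) + C (2 * c) * D ^ 2 + C (2 * a) * (N * X * D)) := by
          simp only [C_mul, map_ofNat]
        rw [e]
        refine (natDegree_C_mul_le _ _).trans ?_
        refine natDegree_add_le_of_degree_le (natDegree_add_le_of_degree_le (by omega) ?_) ?_
        · exact (natDegree_C_mul_le _ _).trans (by omega)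
        · exact (natDegree_C_mul_le _ _).trans (by omega)
      · have h3 : (N + X * D + C a * D).natDegree ≤ w.height + 1 := by compute_degree; omega
        have h4 : (N * X - C b * D).natDegree ≤ w.height + 1 := by compute_degree; omega
        have h5 : ((N * X - C b * D) ^ 2).natDegree ≤ 2 * (w.height + 1) :=
          natDegree_pow_le_of_le 2 h4
        have h6 := natDegree_mul_le_of_le h3 hDd
        have e : (N * X - C b * D) ^ 2 - 4 * C c * (N + X * D + C a * D) * D =
          (N * X - C b * D) ^ 2 - C (4 * c) * ((N + X * D + C a * D) * D) := by
          simp only [C_mul, map_ofNat]; ring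
        rw [e]
        refine (natDegree_sub_le _ _).trans (max_le (h5.trans (by omega)) ?_)
        exact (natDegree_C_mul_le _ _).trans (by omega)

end TwistedCurve

namespace TwistedCurve

variable {F : Type*} [Field F]

theorem natDegree_frobenius_numerator_le (a b c s : F) (m : ℕ) :
    ((X ^ (2 * m + 1)) ^ 3 + C a * (X ^ (2 * m + 1)) ^ 2 + C b * X ^ (2 * m + 1) + C c -
      C s * (X ^ 3 + C a * X ^ 2 + C b * X + C c) ^ (m + 1) +
      (X ^ 3 + C a * X ^ 2 + C b * X + C c) -
      (C a + X + X ^ (2 * m + 1)) * (X ^ (2 * m + 1) - X) ^ 2 : F[X]).natDegree ≤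
      2 * (2 * m + 1) + 1 := by
  have h1 : (C s * (X ^ 3 + C a * X ^ 2 + C b * X + C c) ^ (m + 1) : F[X]).natDegree ≤
      2 * (2 * m + 1) + 1 := by
    refine (natDegree_C_mul_le _ _).trans ?_
    refine (natDegree_pow_le_of_le (m + 1) (natDegree_cubic a b c).le).trans ?_
    omega
  have h2 : (X * (X ^ (2 * m + 1)) ^ 2 + X ^ 2 * X ^ (2 * m + 1) - X ^ 3 +
      C (2 * a) * X * X ^ (2 * m + 1) - C a * X ^ 2 + C b * X ^ (2 * m + 1) + C c : F[X]).natDegree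
      ≤ 2 * (2 * m + 1) + 1 := by
    compute_degree
    simp only [max_le_iff]
    omega
  have h3 : (X ^ 3 + C a * X ^ 2 + C b * X + C c : F[X]).natDegree ≤ 2 * (2 * m + 1) + 1 := by
    rw [natDegree_cubic]; omega
  have e : ((X ^ (2 * m + 1)) ^ 3 + C a * (X ^ (2 * m + 1)) ^ 2 + C b * X ^ (2 * m + 1) + C c -
      C s * (X ^ 3 + C a * X ^ 2 + C b * X + C c) ^ (m + 1) +
      (X ^ 3 + C a * X ^ 2 + C b * X + C c) -
      (C a + X + X ^ (2 * m + 1)) * (X ^ (2 * m + 1) - X) ^ 2 : F[X]) =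
      (X * (X ^ (2 * m + 1)) ^ 2 + X ^ 2 * X ^ (2 * m + 1) - X ^ 3 +
      C (2 * a) * X * X ^ (2 * m + 1) - C a * X ^ 2 + C b * X ^ (2 * m + 1) + C c) +
      (X ^ 3 + C a * X ^ 2 + C b * X + C c) -
      C s * (X ^ 3 + C a * X ^ 2 + C b * X + C c) ^ (m + 1) := by
    simp only [C_mul, map_ofNat]
    ring
  rw [e]
  refine (natDegree_sub_le _ _).trans (max_le ?_ h1)
  exact natDegree_add_le_of_degree_le h2 h3

variable [Fintype F]

theorem frobenius_cubic (a b c : F) : (X ^ 3 + C a * X ^ 2 + C b * X + C c : F[X]) ^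
      Fintype.card F = (X ^ Fintype.card F) ^ 3 + C a * (X ^ Fintype.card F) ^ 2 +
      C b * X ^ Fintype.card F + C c := by
  rw [← FiniteField.expand_card]
  simp

variable [DecidableEq F]

open Classical in
theorem height_frobenius_add_le (hF : ringChar F ≠ 2) {a b c : F} {σ : ℤ} (hσ : σ = 1 ∨ σ = -1)
    {m : ℕ} (hm : Fintype.card F = 2 * m + 1) {x₁ y₁ x₂ y₂ : RatFunc F}
    (h₁ : (curve a b c).Nonsingular x₁ y₁) (h₂ : (curve a b c).Nonsingular x₂ y₂)
    (hx₁ : x₁ = algebraMap F[X] (RatFunc F)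
      ((X ^ 3 + C a * X ^ 2 + C b * X + C c) * X ^ Fintype.card F))
    (hy₁ : y₁ = algebraMap F[X] (RatFunc F)
      ((X ^ 3 + C a * X ^ 2 + C b * X + C c) ^ 2 * (X ^ 3 + C a * X ^ 2 + C b * X + C c) ^ m))
    (hx₂ : x₂ = algebraMap F[X] (RatFunc F) ((X ^ 3 + C a * X ^ 2 + C b * X + C c) * X))
    (hy₂ : y₂ = algebraMap F[X] (RatFunc F)
      ((X ^ 3 + C a * X ^ 2 + C b * X + C c) ^ 2 * (σ : F[X]))) :
    (height a b c (.some x₁ y₁ h₁ + .some x₂ y₂ h₂) : ℤ) ≤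
      Fintype.card F + 1 - σ * ∑ x : F, quadraticChar F (x ^ 3 + a * x ^ 2 + b * x + c) := by
  set f : F[X] := X ^ 3 + C a * X ^ 2 + C b * X + C c with hf
  set ι := algebraMap F[X] (RatFunc F) with hι
  set q := Fintype.card F with hq
  have hinj : Function.Injective ι := IsFractionRing.injective F[X] (RatFunc F)
  have hf0 : f ≠ 0 := cubic_ne_zero a b c
  have hl0 : ι f ≠ 0 := by simpa [hι] using hf0
  have hq1 : 1 < q := Fintype.one_lt_card
  have hV0 : (X ^ q - X : F[X]) ≠ 0 := FiniteField.X_pow_card_sub_X_ne_zero F hq1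
  have hV0' : ι (X ^ q - X) ≠ 0 := by simpa [hι] using (map_ne_zero_iff _ hinj).2 hV0
  have hxx : x₁ ≠ x₂ := by
    rw [hx₁, hx₂]
    intro h
    have := mul_left_cancel₀ hf0 (hinj h)
    exact hV0 (sub_eq_zero.2 this)
  have hσ2 : σ ^ 2 = 1 := by rcases hσ with rfl | rfl <;> norm_num
  have hσ2' : ((σ : F[X])) ^ 2 = 1 := by exact_mod_cast congrArg (Int.cast : ℤ → F[X]) hσ2
  set U : F[X] := f * (f ^ m - (σ : F[X])) ^ 2 - (C a + X + X ^ q) * (X ^ q - X) ^ 2 with hU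
  have hfq := frobenius_cubic a b c
  rw [← hf, ← hq] at hfq
  have hUdeg : U.natDegree ≤ 2 * q + 1 := by
    have := natDegree_frobenius_numerator_le a b c (2 * (σ : F)) m
    rw [← hf, ← hm, ← hfq, hm] at this
    rw [hm]
    convert this using 2
    rw [hU, hm]
    have e : C (2 * (σ : F)) = 2 * (σ : F[X]) := by rw [C_mul, map_ofNat]; simp
    rw [e]
    linear_combination f * hσ2'
  set e : F → ℕ := fun x => if quadraticChar F (x ^ 3 + a * x ^ 2 + b * x + c) = σ then 2 else
    if quadraticChar F (x ^ 3 + a * x ^ 2 + b * x + c) = 0 then 1 else 0 with he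
  set G : F[X] := ∏ x : F, (X - C x) ^ e x with hG
  have hGV : G ∣ (X ^ q - X) ^ 2 := by
    refine Finset.prod_dvd_of_coprime ?_ fun x _ => ?_
    · intro x _ y _ hxy
      exact (pairwise_coprime_X_sub_C Function.injective_id hxy).pow
    · refine (pow_dvd_pow (m := e x) (n := 2) _ ?_).trans (pow_dvd_pow_of_dvd ?_ 2)
      · simp only [he]; split_ifs <;> simp
      · rw [dvd_iff_isRoot, IsRoot.def]
        simp [hq, FiniteField.pow_card]
  have hGf : G ∣ f * (f ^ m - (σ : F[X])) ^ 2 := by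
    refine Finset.prod_dvd_of_coprime ?_ ?_
    · intro x _ y _ hxy
      exact (pairwise_coprime_X_sub_C Function.injective_id hxy).pow
    · intro x _
      have hev : f.eval x = x ^ 3 + a * x ^ 2 + b * x + c := by simp [hf]
      simp only [he]
      split_ifs with h h'
      · refine dvd_mul_of_dvd_right (pow_dvd_pow_of_dvd ?_ 2) _
        rw [dvd_iff_isRoot, IsRoot.def, eval_sub, eval_pow, hev]
        have := quadraticChar_eq_pow_of_char_ne_two' hF (x ^ 3 + a * x ^ 2 + b * x + c)
        rw [h, ← hq, hm] at this
        rw [show m = (2 * m + 1) / 2 by omega, ← this]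
        simp
      · rw [quadraticChar_eq_zero_iff] at h'
        rw [pow_one]
        refine dvd_mul_of_dvd_left ?_ _
        rw [dvd_iff_isRoot, IsRoot.def, hev, h']
      · simp
  have hGU : G ∣ U := dvd_sub hGf (hGV.mul_left _)
  have hGdeg : G.natDegree = ∑ x, e x := by
    rw [hG, natDegree_prod _ _ (fun x _ => pow_ne_zero _ (X_sub_C_ne_zero x))]
    simp
  have hsum : (∑ x, (e x : ℤ)) = q + σ * ∑ x : F, quadraticChar F (x ^ 3 + a * x ^ 2 + b * x + c) := by
    have : (q : ℤ) = ∑ x : F, 1 := by simp [hq]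
    rw [this, Finset.mul_sum, ← Finset.sum_add_distrib]
    refine Finset.sum_congr rfl fun x _ => ?_
    simp only [he]
    rcases eq_or_ne (x ^ 3 + a * x ^ 2 + b * x + c) 0 with h | h
    · rw [h, quadraticChar_zero]
      rcases hσ with rfl | rfl <;> simp
    · rcases quadraticChar_dichotomy h with h | h <;> rw [h] <;>
        rcases hσ with rfl | rfl <;> simp
  have hheight : height a b c (.some x₁ y₁ h₁ + .some x₂ y₂ h₂) = (ι U / ι ((X ^ q - X) ^ 2)).height := by
    rw [WeierstrassCurve.Affine.Point.add_of_X_ne hxx]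
    simp only [height]
    rw [← hf, ← hι]
    congr 1
    rw [WeierstrassCurve.Affine.slope_of_X_ne hxx]
    simp only [WeierstrassCurve.Affine.addX, curve]
    rw [← hf, ← hι, hx₁, hx₂, hy₁, hy₂]
    have e1 : (ι (f ^ 2 * f ^ m) - ι (f ^ 2 * (σ : F[X]))) / (ι (f * X ^ q) - ι (f * X)) =
        ι (f * (f ^ m - (σ : F[X]))) / ι (X ^ q - X) := by
      have : ι (f * X ^ q) - ι (f * X) ≠ 0 := by
        rw [← map_sub, ← mul_sub, map_mul]; exact mul_ne_zero hl0 hV0'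
      rw [div_eq_div_iff this hV0', ← map_sub, ← map_sub, ← map_mul, ← map_mul]
      congr 1
      ring
    rw [e1, hU]
    simp only [map_mul, map_sub, map_add, map_pow]
    simp only [map_sub, map_pow] at hV0'
    field_simp
    ring
  have hfin := RatFunc.height_div_add_natDegree_le (pow_ne_zero 2 hV0) hGU hGV
  have hVdeg : ((X ^ q - X : F[X]) ^ 2).natDegree = 2 * q := by
    rw [natDegree_pow, FiniteField.X_pow_card_sub_X_natDegree_eq F hq1]
  rw [← hι, ← hheight, hVdeg, hGdeg] at hfin
  have hfin' : height a b c (.some x₁ y₁ h₁ + .some x₂ y₂ h₂) + ∑ x, e x ≤ 2 * q + 1 := by omega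
  zify at hfin'
  rw [hsum] at hfin'
  linarith

theorem le_of_second_difference_le {g : ℕ → ℤ} {q A : ℤ} (h0 : g 0 = q) (h1 : g 1 ≤ q + 1 - A)
    (h : ∀ n, g (n + 2) + g n ≤ 2 * g (n + 1) + 2) (n : ℕ) : g n ≤ n ^ 2 - n * A + q := by
  have h2 : ∀ n : ℕ, g (n + 1) - g n ≤ 2 * n + 1 - A := by
    intro n
    induction n with
    | zero => simp only [zero_add, h0]; push_cast; linarith
    | succ k ih => have := h k; push_cast; linarith
  induction n with
  | zero => simp [h0]
  | succ k ih => have := h2 k; push_cast; nlinarith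

theorem sq_le_of_forall_nat {q A : ℤ} (hA : 0 ≤ A) (h : ∀ n : ℕ, 0 ≤ (n : ℤ) ^ 2 - n * A + q) :
    A ^ 2 ≤ 4 * q + 1 := by
  have h1 := h (A / 2).toNat
  rw [Int.toNat_of_nonneg (by omega)] at h1
  rcases Int.emod_two_eq_zero_or_one A with h2 | h2
  · obtain ⟨k, hk⟩ : ∃ k, A = 2 * k := ⟨A / 2, by omega⟩
    rw [show A / 2 = k by omega] at h1
    subst hk; nlinarith
  · obtain ⟨k, hk⟩ : ∃ k, A = 2 * k + 1 := ⟨A / 2, by omega⟩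
    rw [show A / 2 = k by omega] at h1
    subst hk; nlinarith

end TwistedCurve

open TwistedCurve in
open Classical in
/-- **Hasse's bound** for the quadratic character sum of a monic cubic. -/
theorem sq_sum_quadraticChar_cubic_le {F : Type*} [Field F] [Fintype F] [DecidableEq F]
    (hF : ringChar F ≠ 2) (a b c : F) :
    (∑ x : F, quadraticChar F (x ^ 3 + a * x ^ 2 + b * x + c)) ^ 2 ≤ 4 * Fintype.card F + 1 := by
  set A := ∑ x : F, quadraticChar F (x ^ 3 + a * x ^ 2 + b * x + c) with hA
  set f : F[X] := X ^ 3 + C a * X ^ 2 + C b * X + C c with hf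
  set ι := algebraMap F[X] (RatFunc F) with hι
  have hinj : Function.Injective ι := IsFractionRing.injective F[X] (RatFunc F)
  have hf0 : f ≠ 0 := cubic_ne_zero a b c
  have hl0 : ι f ≠ 0 := by simpa [hι] using hf0
  have hfe : ι f = ι X ^ 3 + ι (C a) * ι X ^ 2 + ι (C b) * ι X + ι (C c) := by
    rw [hf]; simp only [map_add, map_mul, map_pow]
  have h2 : (2 : F) ≠ 0 := Ring.two_ne_zero hF
  obtain ⟨m, hm⟩ : ∃ m, Fintype.card F = 2 * m + 1 :=
    ⟨Fintype.card F / 2, by have := FiniteField.odd_card_of_char_ne_two hF; omega⟩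
  have hfq := frobenius_cubic a b c
  rw [← hf] at hfq
  have hP : (curve a b c).Nonsingular (ι (f * X)) (ι (f ^ 2)) := by
    refine nonsingular_of (equation_iff.2 ?_) h2 (by rw [map_pow]; exact pow_ne_zero _ hl0)
    rw [← hf, ← hι]
    simp only [map_mul, map_pow]
    linear_combination ι f ^ 3 * hfe
  have hQ : (curve a b c).Nonsingular (ι (f * X ^ Fintype.card F)) (ι (f ^ 2 * f ^ m)) := by
    refine nonsingular_of (equation_iff.2 ?_) h2 (by
      rw [map_mul, map_pow, map_pow]; exact mul_ne_zero (pow_ne_zero _ hl0) (pow_ne_zero _ hl0))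
    rw [← hf, ← hι]
    have := congrArg ι hfq
    rw [hm] at this ⊢
    simp only [map_mul, map_pow, map_add] at this ⊢
    linear_combination ι f ^ 3 * this
  set P : (curve a b c).Point := .some _ _ hP with hPd
  set Q : (curve a b c).Point := .some _ _ hQ with hQd
  have hrec : ∀ R, height a b c (R + P) + height a b c (R - P) ≤ 2 * height a b c R + 2 :=
    fun R => height_add_height_sub_le h2 P R hPd rfl (by rw [map_pow]; exact pow_ne_zero _ hl0)
  have hQh : height a b c Q = Fintype.card F := by
    rw [hQd]
    simp only [height]
    rw [← hf, ← hι]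
    have : ι (f * X ^ Fintype.card F) / ι f = ι (X ^ Fintype.card F) := by
      rw [map_mul]; field_simp
    rw [this, RatFunc.height, hι, RatFunc.num_algebraMap, RatFunc.denom_algebraMap]
    simp
  have hadd : (height a b c (Q + P) : ℤ) ≤ Fintype.card F + 1 - A := by
    have := height_frobenius_add_le hF (σ := 1) (Or.inl rfl) hm hQ hP rfl rfl rfl (by simp [hf, hι])
    rwa [one_mul] at this
  have hsub : (height a b c (Q - P) : ℤ) ≤ Fintype.card F + 1 - (-A) := by
    have hP' := (WeierstrassCurve.Affine.nonsingular_neg (W' := curve a b c) _ _).2 hP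
    have := height_frobenius_add_le hF (σ := -1) (Or.inr rfl) hm hQ hP' rfl rfl rfl
      (by simp [hf, hι, WeierstrassCurve.Affine.negY, curve])
    rw [neg_one_mul] at this
    rw [sub_eq_add_neg, hPd, WeierstrassCurve.Affine.Point.neg_some]
    exact this
  have hnat : ∀ (B : ℤ) (S : (curve a b c).Point), (S = P ∨ S = -P) →
      (height a b c (Q + S) : ℤ) ≤ Fintype.card F + 1 - B →
      ∀ n : ℕ, 0 ≤ (n : ℤ) ^ 2 - n * B + Fintype.card F := by
    intro B S hS hB n
    refine le_trans (Int.natCast_nonneg (height a b c (Q + n • S))) ?_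
    refine le_of_second_difference_le (g := fun n => (height a b c (Q + n • S) : ℤ))
      (by simp [hQh]) (by simpa using hB) (fun k => ?_) n
    have e1 : Q + (k + 2) • S = Q + (k + 1) • S + S := by rw [add_assoc, ← succ_nsmul]
    have e2 : Q + k • S = Q + (k + 1) • S - S := by rw [succ_nsmul]; abel
    rw [e1, e2]
    have := hrec (Q + (k + 1) • S)
    rcases hS with rfl | rfl
    · exact_mod_cast this
    · rw [← sub_eq_add_neg, sub_neg_eq_add]
      rw [add_comm] at this
      exact_mod_cast this
  rcases le_total 0 A with h | h
  · exact sq_le_of_forall_nat h (hnat A P (Or.inl rfl) hadd)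
  · rw [← neg_sq]
    exact sq_le_of_forall_nat (by linarith) (hnat (-A) (-P) (Or.inr rfl) (by rwa [← sub_eq_add_neg]))

/-- The integer part of `√(4q + 1)`, where `q` is the number of elements of `F`. -/
def hasseBound (F : Type*) [Fintype F] : ℤ := Nat.sqrt (4 * Fintype.card F + 1)

theorem hasseBound_nonneg (F : Type*) [Fintype F] : 0 ≤ hasseBound F := Int.natCast_nonneg _

theorem hasseBound_sq_le (F : Type*) [Fintype F] :
    hasseBound F ^ 2 ≤ 4 * Fintype.card F + 1 := by
  rw [hasseBound]
  exact_mod_cast Nat.sqrt_le' (4 * Fintype.card F + 1)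

theorem sum_eq_sum_add_inv {F : Type*} [Field F] [Fintype F] {M : Type*} [AddCommMonoid M] (r : F) (φ : F → M) :
    ∑ x, φ x = ∑ z, φ (r + z⁻¹) :=
  (Fintype.sum_equiv ((Equiv.inv F).trans (Equiv.addLeft r)) _ _ fun z => by simp).symm

section CharSum

variable {F : Type*} [Field F] [Fintype F] [DecidableEq F]

theorem quadraticChar_sq_mul {z : F} (hz : z ≠ 0) (x : F) :
    quadraticChar F (z ^ 2 * x) = quadraticChar F x := by
  rw [map_mul, quadraticChar_sq_one' hz, one_mul]

theorem sum_quadraticChar_linear (hF : ringChar F ≠ 2) {a : F} (ha : a ≠ 0) (b : F) :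
    ∑ x : F, quadraticChar F (a * x + b) = 0 := by
  rw [← quadraticChar_sum_zero hF]
  exact Fintype.sum_equiv ((Equiv.mulLeft₀ a ha).trans (Equiv.addRight b)) _ _ fun x => by simp

theorem abs_sum_quadraticChar_cubic_le (hF : ringChar F ≠ 2) {k : F} (hk : k ≠ 0) (a b c : F) :
    |∑ x : F, quadraticChar F (k * x ^ 3 + a * x ^ 2 + b * x + c)| ≤ hasseBound F := by
  have h : ∑ x : F, quadraticChar F (k * x ^ 3 + a * x ^ 2 + b * x + c) =
      ∑ x : F, quadraticChar F (x ^ 3 + a * x ^ 2 + b * k * x + c * k ^ 2) := by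
    refine Fintype.sum_equiv (Equiv.mulLeft₀ k hk) _ _ fun x => ?_
    rw [← quadraticChar_sq_mul hk]
    simp only [Equiv.mulLeft₀_apply]
    congr 1; ring
  rw [h, hasseBound, Int.abs_eq_natAbs, Nat.cast_le, Nat.le_sqrt']
  zify
  rw [sq_abs]
  exact sq_sum_quadraticChar_cubic_le hF _ _ _

theorem sum_quadraticChar_sub_mul_sub (hF : ringChar F ≠ 2) {a b : F} (hab : a ≠ b) :
    ∑ x : F, quadraticChar F ((x - a) * (x - b)) = -1 := by
  have h : ∀ z : F, quadraticChar F ((a + z⁻¹ - a) * (a + z⁻¹ - b)) =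
      quadraticChar F ((a - b) * z + 1) - if z = 0 then 1 else 0 := by
    intro z
    rcases eq_or_ne z 0 with rfl | hz
    · simp
    · rw [← quadraticChar_sq_mul hz, if_neg hz, sub_zero]
      congr 1; field_simp; ring
  rw [sum_eq_sum_add_inv a, Finset.sum_congr rfl fun z _ => h z, Finset.sum_sub_distrib,
    sum_quadraticChar_linear hF (sub_ne_zero.2 hab)]
  simp

theorem abs_sum_quadraticChar_quartic_le (hF : ringChar F ≠ 2) {r a b c : F}
    (hr : r ^ 3 + a * r ^ 2 + b * r + c ≠ 0) :
    |∑ x : F, quadraticChar F ((x - r) * (x ^ 3 + a * x ^ 2 + b * x + c))| ≤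
      hasseBound F + 1 := by
  have h : ∀ z : F, quadraticChar F ((r + z⁻¹ - r) *
      ((r + z⁻¹) ^ 3 + a * (r + z⁻¹) ^ 2 + b * (r + z⁻¹) + c)) =
      quadraticChar F ((r ^ 3 + a * r ^ 2 + b * r + c) * z ^ 3 +
        (3 * r ^ 2 + 2 * a * r + b) * z ^ 2 + (3 * r + a) * z + 1) - if z = 0 then 1 else 0 := by
    intro z
    rcases eq_or_ne z 0 with rfl | hz
    · simp
    · rw [← quadraticChar_sq_mul (pow_ne_zero 2 hz), if_neg hz, sub_zero]
      congr 1; field_simp; ring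
  rw [sum_eq_sum_add_inv r, Finset.sum_congr rfl fun z _ => h z, Finset.sum_sub_distrib]
  have := abs_le.1 (abs_sum_quadraticChar_cubic_le hF hr (3 * r ^ 2 + 2 * a * r + b) (3 * r + a) 1)
  simp only [Finset.sum_ite_eq', Finset.mem_univ, if_true]
  rw [abs_le]
  constructor <;> linarith

theorem sum_ite_quadratic_eq_zero (hF : ringChar F ≠ 2) {k : F} (hk : k ≠ 0) (b c : F) :
    ∑ x : F, (if k * x ^ 2 + b * x + c = 0 then 1 else 0 : ℤ) =
      1 + quadraticChar F (b ^ 2 - 4 * k * c) := by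
  have h2 : (2 : F) ≠ 0 := Ring.two_ne_zero hF
  have h2k : 2 * k ≠ 0 := mul_ne_zero h2 hk
  have h : ∑ x : F, (if k * x ^ 2 + b * x + c = 0 then 1 else 0 : ℤ) =
      ∑ x : F, if x ^ 2 = b ^ 2 - 4 * k * c then 1 else 0 := by
    refine Fintype.sum_equiv ((Equiv.mulLeft₀ (2 * k) h2k).trans (Equiv.addRight b)) _ _ fun x => ?_
    simp only [Equiv.trans_apply, Equiv.mulLeft₀_apply, Equiv.coe_addRight]
    congr 1
    rw [eq_iff_iff, ← sub_eq_zero (b := b ^ 2 - 4 * k * c),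
      show (2 * k * x + b) ^ 2 - (b ^ 2 - 4 * k * c) = (2 * 2 * k) * (k * x ^ 2 + b * x + c) by ring,
      mul_eq_zero, or_iff_right (mul_ne_zero (mul_ne_zero h2 h2) hk)]
  rw [h, add_comm, ← quadraticChar_card_sqrts hF, Finset.sum_boole]
  congr 2
  ext; simp

theorem sum_quadraticChar_mul_comp_add_div (hF : ringChar F ≠ 2) {s : F} (hs : s ≠ 0) (φ : F → ℤ) :
    ∑ x : F, quadraticChar F x * φ (x + s ^ 2 / x) =
      ∑ v : F, (quadraticChar F (v + 2 * s) + quadraticChar F (v - 2 * s)) * φ v := by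
  have h2 : (2 : F) ≠ 0 := Ring.two_ne_zero hF
  have h : ∀ x : F, quadraticChar F x * φ (x + s ^ 2 / x) = ∑ v : F,
      quadraticChar F (v + 2 * s) * φ v * (if 1 * x ^ 2 + (-v) * x + s ^ 2 = 0 then 1 else 0) +
      (if x = -s then quadraticChar F (-s) * φ (-s + -s) else 0) := by
    intro x
    rcases eq_or_ne x 0 with rfl | hx
    · simp [hs]
    have e : ∀ v : F, 1 * x ^ 2 + (-v) * x + s ^ 2 = 0 ↔ v = x + s ^ 2 / x := by
      intro v
      constructor
      · intro h; field_simp; linear_combination -h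
      · rintro rfl; field_simp; ring
    simp only [e, mul_ite, mul_one, mul_zero, Finset.sum_ite_eq', Finset.mem_univ, if_true]
    have e' : x + s ^ 2 / x + 2 * s = x⁻¹ ^ 2 * ((x + s) ^ 2 * x) := by field_simp; ring
    rw [e', quadraticChar_sq_mul (inv_ne_zero hx)]
    rcases eq_or_ne x (-s) with rfl | hxs
    · have : s ^ 2 / -s = -s := by field_simp
      simp [this]
    · rw [quadraticChar_sq_mul (fun h => hxs (eq_neg_of_add_eq_zero_left h)), if_neg hxs, add_zero]
  rw [Finset.sum_congr rfl fun x _ => h x, Finset.sum_add_distrib, Finset.sum_comm]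
  simp only [Finset.sum_ite_eq', Finset.mem_univ, if_true]
  have h' : ∀ v : F, ∑ x : F,
      quadraticChar F (v + 2 * s) * φ v * (if 1 * x ^ 2 + (-v) * x + s ^ 2 = 0 then 1 else 0) =
      (quadraticChar F (v + 2 * s) + quadraticChar F (v - 2 * s)) * φ v -
      if v = -s + -s then quadraticChar F (-s) * φ (-s + -s) else 0 := by
    intro v
    rw [← Finset.mul_sum, sum_ite_quadratic_eq_zero hF one_ne_zero,
      show (-v) ^ 2 - 4 * 1 * s ^ 2 = (v + 2 * s) * (v - 2 * s) by ring, map_mul]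
    rcases eq_or_ne v (-s + -s) with rfl | hv
    · have e1 : -s + -s + 2 * s = 0 := by ring
      have e2 : -s + -s - 2 * s = 2 ^ 2 * (-s) := by ring
      rw [e1, e2, quadraticChar_sq_mul h2]
      simp
    · have : v + 2 * s ≠ 0 := fun h => hv (by linear_combination h)
      rw [if_neg hv]
      linear_combination φ v * quadraticChar F (v - 2 * s) * quadraticChar_sq_one this
  rw [Finset.sum_congr rfl fun v _ => h' v, Finset.sum_sub_distrib]
  simp

end CharSum

section QuadraticCover

variable {F : Type*} [Field F] [Fintype F] [DecidableEq F]

theorem abs_sum_quadraticChar_triple_le (hF : ringChar F ≠ 2) (a b c : F) :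
    |∑ x : F, quadraticChar F (x - a) * quadraticChar F (x - b) * quadraticChar F (x - c)| ≤
      hasseBound F := by
  convert abs_sum_quadraticChar_cubic_le hF one_ne_zero (-a - b - c) (a * b + a * c + b * c)
    (-a * b * c) using 3 with x
  rw [← map_mul, ← map_mul]
  congr 1; ring

theorem abs_sum_quadraticChar_quadruple_le (hF : ringChar F ≠ 2) {r a b c : F}
    (ha : r ≠ a) (hb : r ≠ b) (hc : r ≠ c) :
    |∑ x : F, quadraticChar F (x - r) * quadraticChar F (x - a) * quadraticChar F (x - b) *
      quadraticChar F (x - c)| ≤ hasseBound F + 1 := by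
  have h : r ^ 3 + (-a - b - c) * r ^ 2 + (a * b + a * c + b * c) * r + (-a * b * c) ≠ 0 := by
    rw [show r ^ 3 + (-a - b - c) * r ^ 2 + (a * b + a * c + b * c) * r + (-a * b * c) =
      (r - a) * (r - b) * (r - c) by ring]
    exact mul_ne_zero (mul_ne_zero (sub_ne_zero.2 ha) (sub_ne_zero.2 hb)) (sub_ne_zero.2 hc)
  convert abs_sum_quadraticChar_quartic_le hF h using 3 with x
  rw [← map_mul, ← map_mul, ← map_mul]
  congr 1; ring

theorem sum_quadraticChar_pair (hF : ringChar F ≠ 2) {a b : F} (hab : a ≠ b) :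
    ∑ x : F, quadraticChar F (x - a) * quadraticChar F (x - b) = -1 := by
  simp_rw [← map_mul]
  exact sum_quadraticChar_sub_mul_sub hF hab

theorem sum_quadraticChar_sub (hF : ringChar F ≠ 2) (a : F) :
    ∑ x : F, quadraticChar F (x - a) = 0 := by
  simpa [sub_eq_add_neg] using sum_quadraticChar_linear hF one_ne_zero (-a)

theorem abs_sum_quadraticChar_pow_five_sub_le (hF : ringChar F ≠ 2) {i : F} (hi : i ^ 2 = -1) :
    |∑ x : F, quadraticChar F (x ^ 5 - x)| ≤ 2 * hasseBound F := by
  have hi0 : i ≠ 0 := by rintro rfl; simp at hi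
  rcases quadraticChar_dichotomy hi0 with h | h
  · obtain ⟨s, hs⟩ := (quadraticChar_one_iff_isSquare hi0).1 h
    have hs0 : s ≠ 0 := by rintro rfl; simp [hi0] at hs
    have e : ∀ x : F, quadraticChar F (x ^ 5 - x) =
        quadraticChar F x * quadraticChar F ((x + s ^ 2 / x) ^ 2 - 2 * i) := by
      intro x
      rcases eq_or_ne x 0 with rfl | hx
      · simp
      rw [← map_mul, ← quadraticChar_sq_mul hx (x * _)]
      congr 1
      rw [show s ^ 2 = i by rw [hs]; ring]
      field_simp
      linear_combination -hi
    rw [Finset.sum_congr rfl fun x _ => e x,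
      sum_quadraticChar_mul_comp_add_div hF hs0 (fun v => quadraticChar F (v ^ 2 - 2 * i))]
    have e' : ∀ v : F, (quadraticChar F (v + 2 * s) + quadraticChar F (v - 2 * s)) *
        quadraticChar F (v ^ 2 - 2 * i) =
        quadraticChar F (1 * v ^ 3 + 2 * s * v ^ 2 + -2 * i * v + -4 * s * i) +
        quadraticChar F (1 * v ^ 3 + -2 * s * v ^ 2 + -2 * i * v + 4 * s * i) := by
      intro v
      rw [add_mul, ← map_mul, ← map_mul]
      congr 2 <;> ring
    rw [Finset.sum_congr rfl fun v _ => e' v, Finset.sum_add_distrib, two_mul (hasseBound F)]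
    exact (abs_add_le _ _).trans (add_le_add (abs_sum_quadraticChar_cubic_le hF one_ne_zero _ _ _)
      (abs_sum_quadraticChar_cubic_le hF one_ne_zero _ _ _))
  · have e : ∑ x : F, quadraticChar F (x ^ 5 - x) = - ∑ x : F, quadraticChar F (x ^ 5 - x) := by
      rw [← Finset.sum_neg_distrib]
      refine Fintype.sum_equiv (Equiv.mulLeft₀ i hi0).symm _ _ fun x => ?_
      obtain ⟨y, rfl⟩ := (Equiv.mulLeft₀ i hi0).surjective x
      rw [Equiv.symm_apply_apply, ← neg_one_mul, ← h, ← map_mul]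
      simp only [Equiv.mulLeft₀_apply]
      congr 1
      linear_combination (i ^ 3 - i) * y ^ 5 * hi
    have : ∑ x : F, quadraticChar F (x ^ 5 - x) = 0 := by linarith
    rw [this, abs_zero]
    have := hasseBound_nonneg F
    linarith

theorem quadraticChar_mem (x : F) :
    quadraticChar F x = 0 ∨ quadraticChar F x = 1 ∨ quadraticChar F x = -1 := by
  rcases eq_or_ne x 0 with rfl | h
  · simp
  · exact Or.inr (quadraticChar_dichotomy h)

theorem one_sub_quadraticChar_mem (x : F) :
    0 ≤ 1 - quadraticChar F x ∧ 1 - quadraticChar F x ≤ 2 := by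
  rcases quadraticChar_mem x with h | h | h <;> rw [h] <;> norm_num

theorem sum_prod_one_sub_quadraticChar_le (T : Finset F)
    (h : ∀ x, ∃ a ∈ T, quadraticChar F (x - a) ≠ -1) :
    ∑ x : F, ∏ a ∈ T, (1 - quadraticChar F (x - a)) ≤ T.card * 2 ^ T.card := by
  have hle : ∀ x, ∏ a ∈ T, (1 - quadraticChar F (x - a)) ≤ 2 ^ T.card := fun x =>
    (Finset.prod_le_prod (fun a _ => (one_sub_quadraticChar_mem _).1)
      fun a _ => (one_sub_quadraticChar_mem _).2).trans_eq (by simp)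
  have hz : ∀ x, x ∉ T → ∏ a ∈ T, (1 - quadraticChar F (x - a)) = 0 := by
    intro x hx
    obtain ⟨a, ha, hne⟩ := h x
    refine Finset.prod_eq_zero ha ?_
    have : x - a ≠ 0 := sub_ne_zero.2 fun h => hx (h ▸ ha)
    rcases quadraticChar_dichotomy this with h | h
    · rw [h, sub_self]
    · exact absurd h hne
  rw [← Finset.sum_subset (Finset.subset_univ T) fun x _ hx => hz x hx]
  exact (Finset.sum_le_card_nsmul _ _ _ fun x _ => hle x).trans_eq (by simp)

theorem exists_forall_three_quadraticChar_eq (hF : ringChar F ≠ 2) (hq : 2809 < Fintype.card F) :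
    ∃ x : F, ∀ a ∈ ({0, 1, -1} : Finset F), quadraticChar F (x - a) = -1 := by
  by_contra! h
  have h1 : (1 : F) ≠ -1 := (Ring.neg_one_ne_one_of_char_ne_two hF).symm
  have hT := sum_prod_one_sub_quadraticChar_le _ h
  have hcard : ({0, 1, -1} : Finset F).card = 3 := Finset.card_eq_three.2
    ⟨0, 1, -1, by simp, by simp, h1, rfl⟩
  rw [hcard] at hT
  have e : ∀ x : F, ∏ a ∈ ({0, 1, -1} : Finset F), (1 - quadraticChar F (x - a)) =
      1 - quadraticChar F (x - 0) - quadraticChar F (x - 1) - quadraticChar F (x - -1) +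
      quadraticChar F (x - 0) * quadraticChar F (x - 1) +
      quadraticChar F (x - 0) * quadraticChar F (x - -1) +
      quadraticChar F (x - 1) * quadraticChar F (x - -1) -
      quadraticChar F (x - 0) * quadraticChar F (x - 1) * quadraticChar F (x - -1) := by
    intro x
    rw [Finset.prod_insert (by simp), Finset.prod_pair h1]
    ring
  rw [Finset.sum_congr rfl fun x _ => e x] at hT
  simp only [Finset.sum_add_distrib, Finset.sum_sub_distrib, sum_quadraticChar_sub hF,
    sum_quadraticChar_pair hF h1, sum_quadraticChar_pair hF (zero_ne_one' F),
    sum_quadraticChar_pair hF (show (0 : F) ≠ -1 by simp)] at hT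
  have h3 := abs_le.1 (abs_sum_quadraticChar_triple_le hF (0 : F) 1 (-1))
  have hs := hasseBound_sq_le F
  have hs0 := hasseBound_nonneg F
  simp only [Finset.sum_const, Finset.card_univ, nsmul_eq_mul, mul_one] at hT
  have hq' : (2809 : ℤ) < Fintype.card F := by exact_mod_cast hq
  push_cast at hT
  nlinarith

theorem exists_forall_five_quadraticChar_eq (hF : ringChar F ≠ 2) (hq : 2809 < Fintype.card F)
    {i : F} (hi : i ^ 2 = -1) :
    ∃ x : F, ∀ a ∈ ({0, 1, -1, i, -i} : Finset F), quadraticChar F (x - a) = -1 := by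
  by_contra! h
  have h2 : (2 : F) ≠ 0 := Ring.two_ne_zero hF
  have h1 : (1 : F) ≠ -1 := (Ring.neg_one_ne_one_of_char_ne_two hF).symm
  have h0 : (0 : F) ≠ 1 := zero_ne_one' F
  have h0' : (0 : F) ≠ -1 := by simp
  have hi0 : (0 : F) ≠ i := by rintro rfl; simp at hi
  have hi0' : (0 : F) ≠ -i := by simpa [eq_comm] using hi0
  have hi1 : (1 : F) ≠ i := by rintro rfl; exact h1 (by simpa using hi)
  have hi1' : (1 : F) ≠ -i := by
    intro h; rw [← neg_sq, ← h] at hi; exact h1 (by simpa using hi)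
  have hi2 : (-1 : F) ≠ i := by rintro rfl; exact h1 (by simpa using hi)
  have hi2' : (-1 : F) ≠ -i := by simpa using hi1
  have hii : i ≠ -i := by
    intro h
    rcases mul_eq_zero.1 (show 2 * i = 0 by linear_combination h) with h | h
    · exact h2 h
    · exact hi0 h.symm
  have hT := sum_prod_one_sub_quadraticChar_le _ h
  have n0 : (0 : F) ∉ ({1, -1, i, -i} : Finset F) := by simp [hi0, hi0', h0]
  have n1 : (1 : F) ∉ ({-1, i, -i} : Finset F) := by simp [h1, hi1, hi1']
  have n2 : (-1 : F) ∉ ({i, -i} : Finset F) := by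
    rw [Finset.mem_insert, Finset.mem_singleton]; tauto
  have hcard : ({0, 1, -1, i, -i} : Finset F).card = 5 := by
    rw [Finset.card_insert_of_notMem n0, Finset.card_insert_of_notMem n1,
      Finset.card_insert_of_notMem n2, Finset.card_pair hii]
  rw [hcard] at hT
  have hprod : ∀ x : F, quadraticChar F (x - 0) * quadraticChar F (x - 1) *
      quadraticChar F (x - -1) * quadraticChar F (x - i) * quadraticChar F (x - -i) =
      quadraticChar F (x ^ 5 - x) := by
    intro x
    simp only [← map_mul]
    congr 1
    linear_combination (x - x ^ 3) * hi
  have e : ∀ x : F, ∏ a ∈ ({0, 1, -1, i, -i} : Finset F), (1 - quadraticChar F (x - a)) =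
      1 - quadraticChar F (x - 0) - quadraticChar F (x - 1) - quadraticChar F (x - -1) -
        quadraticChar F (x - i) - quadraticChar F (x - -i) +
      quadraticChar F (x - 0) * quadraticChar F (x - 1) +
      quadraticChar F (x - 0) * quadraticChar F (x - -1) +
      quadraticChar F (x - 0) * quadraticChar F (x - i) +
      quadraticChar F (x - 0) * quadraticChar F (x - -i) +
      quadraticChar F (x - 1) * quadraticChar F (x - -1) +
      quadraticChar F (x - 1) * quadraticChar F (x - i) +
      quadraticChar F (x - 1) * quadraticChar F (x - -i) +
      quadraticChar F (x - -1) * quadraticChar F (x - i) +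
      quadraticChar F (x - -1) * quadraticChar F (x - -i) +
      quadraticChar F (x - i) * quadraticChar F (x - -i) -
      quadraticChar F (x - 0) * quadraticChar F (x - 1) * quadraticChar F (x - -1) -
      quadraticChar F (x - 0) * quadraticChar F (x - 1) * quadraticChar F (x - i) -
      quadraticChar F (x - 0) * quadraticChar F (x - 1) * quadraticChar F (x - -i) -
      quadraticChar F (x - 0) * quadraticChar F (x - -1) * quadraticChar F (x - i) -
      quadraticChar F (x - 0) * quadraticChar F (x - -1) * quadraticChar F (x - -i) -
      quadraticChar F (x - 0) * quadraticChar F (x - i) * quadraticChar F (x - -i) -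
      quadraticChar F (x - 1) * quadraticChar F (x - -1) * quadraticChar F (x - i) -
      quadraticChar F (x - 1) * quadraticChar F (x - -1) * quadraticChar F (x - -i) -
      quadraticChar F (x - 1) * quadraticChar F (x - i) * quadraticChar F (x - -i) -
      quadraticChar F (x - -1) * quadraticChar F (x - i) * quadraticChar F (x - -i) +
      quadraticChar F (x - 1) * quadraticChar F (x - -1) * quadraticChar F (x - i) *
        quadraticChar F (x - -i) +
      quadraticChar F (x - 0) * quadraticChar F (x - -1) * quadraticChar F (x - i) *
        quadraticChar F (x - -i) +
      quadraticChar F (x - 0) * quadraticChar F (x - 1) * quadraticChar F (x - i) *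
        quadraticChar F (x - -i) +
      quadraticChar F (x - 0) * quadraticChar F (x - 1) * quadraticChar F (x - -1) *
        quadraticChar F (x - -i) +
      quadraticChar F (x - 0) * quadraticChar F (x - 1) * quadraticChar F (x - -1) *
        quadraticChar F (x - i) - quadraticChar F (x ^ 5 - x) := by
    intro x
    rw [Finset.prod_insert n0, Finset.prod_insert n1, Finset.prod_insert n2, Finset.prod_pair hii,
      ← hprod x]
    ring
  rw [Finset.sum_congr rfl fun x _ => e x] at hT
  simp only [Finset.sum_add_distrib, Finset.sum_sub_distrib, sum_quadraticChar_sub hF,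
    sum_quadraticChar_pair hF h1, sum_quadraticChar_pair hF h0, sum_quadraticChar_pair hF h0',
    sum_quadraticChar_pair hF hi0, sum_quadraticChar_pair hF hi0', sum_quadraticChar_pair hF hi1,
    sum_quadraticChar_pair hF hi1', sum_quadraticChar_pair hF hi2, sum_quadraticChar_pair hF hi2',
    sum_quadraticChar_pair hF hii, Finset.sum_const, Finset.card_univ, nsmul_eq_mul, mul_one] at hT
  have t := fun a b c : F => (abs_le.1 (abs_sum_quadraticChar_triple_le hF a b c)).2
  have h5 := (abs_le.1 (abs_sum_quadraticChar_pow_five_sub_le hF hi)).2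
  have q1 := (abs_le.1 (abs_sum_quadraticChar_quadruple_le hF h1 hi1 hi1')).1
  have q2 := (abs_le.1 (abs_sum_quadraticChar_quadruple_le hF h0' hi0 hi0')).1
  have q3 := (abs_le.1 (abs_sum_quadraticChar_quadruple_le hF h0 hi0 hi0')).1
  have q4 := (abs_le.1 (abs_sum_quadraticChar_quadruple_le hF h0 h0' hi0')).1
  have q5 := (abs_le.1 (abs_sum_quadraticChar_quadruple_le hF h0 h0' hi0)).1
  have key : (Fintype.card F : ℤ) ≤ 17 * hasseBound F + 175 := by
    push_cast at hT
    linarith [t 0 1 (-1), t 0 1 i, t 0 1 (-i), t 0 (-1) i, t 0 (-1) (-i), t 0 i (-i), t 1 (-1) i,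
      t 1 (-1) (-i), t 1 i (-i), t (-1) i (-i)]
  have hs := hasseBound_sq_le F
  have hs0 := hasseBound_nonneg F
  have hq' : (2809 : ℤ) < Fintype.card F := by exact_mod_cast hq
  nlinarith

end QuadraticCover

/-- The sum of the two nontrivial cubic characters of a finite field with `3 ∣ q - 1`: it is
`2` on nonzero cubes, `-1` on noncubes and `0` at `0`. -/
def cubicTrace {F : Type*} [Field F] [Fintype F] [DecidableEq F] (x : F) : ℤ :=
  if x = 0 then 0 else if x ^ ((Fintype.card F - 1) / 3) = 1 then 2 else -1

section CubicTrace

variable {F : Type*} [Field F] [Fintype F] [DecidableEq F]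

@[simp] theorem cubicTrace_zero : cubicTrace (0 : F) = 0 := if_pos rfl

@[simp] theorem cubicTrace_one : cubicTrace (1 : F) = 2 := by simp [cubicTrace]

theorem cubicTrace_mem (x : F) : cubicTrace x ∈ ({0, 2, -1} : Finset ℤ) := by
  rw [cubicTrace]; split_ifs <;> simp

theorem cubicTrace_of_ne_zero {x : F} (hx : x ≠ 0) : cubicTrace x = 2 ∨ cubicTrace x = -1 := by
  rw [cubicTrace, if_neg hx]; split_ifs <;> simp

omit [DecidableEq F] in
theorem pow_card_sub_one_div_three_pow (h3 : 3 ∣ Fintype.card F - 1) {x : F} (hx : x ≠ 0) :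
    (x ^ ((Fintype.card F - 1) / 3)) ^ 3 = 1 := by
  rw [← pow_mul, Nat.div_mul_cancel h3, FiniteField.pow_card_sub_one_eq_one x hx]

theorem cubicTrace_cube_mul (h3 : 3 ∣ Fintype.card F - 1) {z : F} (hz : z ≠ 0) (x : F) :
    cubicTrace (z ^ 3 * x) = cubicTrace x := by
  simp only [cubicTrace, mul_eq_zero, pow_eq_zero_iff (three_ne_zero), hz, false_or]
  rw [mul_pow, ← pow_mul, mul_comm 3, pow_mul, pow_card_sub_one_div_three_pow h3 hz, one_mul]

theorem cubicTrace_mul (h3 : 3 ∣ Fintype.card F - 1) (u v : F) :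
    cubicTrace u * cubicTrace v = cubicTrace (u * v) + cubicTrace (u * v ^ 2) := by
  rcases eq_or_ne u 0 with rfl | hu
  · simp
  rcases eq_or_ne v 0 with rfl | hv
  · simp
  have ha := pow_card_sub_one_div_three_pow h3 hu
  have hb := pow_card_sub_one_div_three_pow h3 hv
  simp only [cubicTrace, mul_eq_zero, pow_eq_zero_iff two_ne_zero, hu, hv, or_false, if_false,
    mul_pow, ← pow_mul v 2]
  rw [mul_comm 2, pow_mul]
  generalize u ^ ((Fintype.card F - 1) / 3) = a at *
  generalize v ^ ((Fintype.card F - 1) / 3) = b at *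
  by_cases ha1 : a = 1
  · subst ha1
    have : b ^ 2 = 1 ↔ b = 1 :=
      ⟨fun h => by linear_combination hb - b * h, by rintro rfl; simp⟩
    simp only [one_mul, this]
    split_ifs <;> rfl
  by_cases hb1 : b = 1
  · subst hb1; simp [ha1]
  have ha2 : a ^ 2 + a + 1 = 0 :=
    (mul_eq_zero.1 (show (a - 1) * (a ^ 2 + a + 1) = 0 by linear_combination ha)).resolve_left
      (sub_ne_zero.2 ha1)
  have hb2 : b ^ 2 + b + 1 = 0 :=
    (mul_eq_zero.1 (show (b - 1) * (b ^ 2 + b + 1) = 0 by linear_combination hb)).resolve_left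
      (sub_ne_zero.2 hb1)
  rcases mul_eq_zero.1 (show (a - b) * (a + b + 1) = 0 by linear_combination ha2 - hb2) with h | h
  · have hab : a = b := sub_eq_zero.1 h
    subst hab
    have h1 : a * a ≠ 1 := fun h => ha1 (by linear_combination ha - a * h)
    have h2 : a * a ^ 2 = 1 := by linear_combination ha
    simp [ha1, h1, h2]
  · have hab : a = b ^ 2 := by linear_combination h - hb2
    have h1 : a * b = 1 := by rw [hab]; linear_combination hb
    have h2 : a * b ^ 2 ≠ 1 := fun h => hb1 (by linear_combination h - b * h1)
    simp [ha1, hb1, h1, h2]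

theorem cubicTrace_sq (h3 : 3 ∣ Fintype.card F - 1) (x : F) :
    cubicTrace (x ^ 2) = cubicTrace x := by
  have := cubicTrace_mul h3 1 x
  simp only [one_mul, cubicTrace_one] at this
  linarith

theorem cubicTrace_mul_sq_comm (h3 : 3 ∣ Fintype.card F - 1) (u v : F) :
    cubicTrace (u * v ^ 2) = cubicTrace (v * u ^ 2) := by
  rcases eq_or_ne v 0 with rfl | hv
  · simp
  rw [← cubicTrace_sq h3, ← cubicTrace_cube_mul h3 hv (v * u ^ 2)]
  congr 1; ring

omit [DecidableEq F] in
theorem exists_cube_eq_of_pow_eq_one (h3 : 3 ∣ Fintype.card F - 1) {x : F} (hx : x ≠ 0)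
    (h : x ^ ((Fintype.card F - 1) / 3) = 1) : ∃ y, y ≠ 0 ∧ y ^ 3 = x := by
  obtain ⟨ζ, hζ⟩ := IsCyclic.exists_generator (α := Fˣ)
  obtain ⟨j, hj⟩ := Subgroup.mem_zpowers_iff.1 (hζ (Units.mk0 x hx))
  have hord : orderOf ζ = Fintype.card F - 1 := by
    rw [orderOf_eq_card_of_forall_mem_zpowers hζ, Nat.card_units, Nat.card_eq_fintype_card]
  obtain ⟨m, hm⟩ := h3
  have hq := Fintype.one_lt_card (α := F)
  rw [hm, Nat.mul_div_cancel_left _ (by norm_num)] at h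
  have h' : ζ ^ (j * m) = 1 := by
    rw [zpow_mul, hj, zpow_natCast]
    ext; simpa using h
  rw [← orderOf_dvd_iff_zpow_eq_one, hord, hm] at h'
  push_cast at h'
  obtain ⟨i, rfl⟩ := Int.dvd_of_mul_dvd_mul_right (by omega) h'
  refine ⟨((ζ ^ i : Fˣ) : F), Units.ne_zero _, ?_⟩
  have := congrArg Units.val hj
  rw [Units.val_mk0] at this
  rw [← this, mul_comm, zpow_mul]
  norm_cast

omit [DecidableEq F] in
theorem exists_cube_root_of_unity (h3 : 3 ∣ Fintype.card F - 1) :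
    ∃ ω : F, ω ≠ 1 ∧ ω ^ 3 = 1 := by
  obtain ⟨ζ, hζ⟩ := IsCyclic.exists_generator (α := Fˣ)
  have hord : orderOf ζ = Fintype.card F - 1 := by
    rw [orderOf_eq_card_of_forall_mem_zpowers hζ, Nat.card_units, Nat.card_eq_fintype_card]
  obtain ⟨m, hm⟩ := h3
  have hq := Fintype.one_lt_card (α := F)
  refine ⟨((ζ ^ m : Fˣ) : F), fun h => ?_, ?_⟩
  · rw [Units.val_eq_one, ← orderOf_dvd_iff_pow_eq_one, hord, hm] at h
    have := Nat.le_of_dvd (by omega) h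
    omega
  · rw [← Units.val_pow_eq_pow_val, Units.val_eq_one, ← pow_mul, ← orderOf_dvd_iff_pow_eq_one, hord,
      hm, mul_comm]

theorem sum_ite_cube_eq (h3 : 3 ∣ Fintype.card F - 1) (x : F) :
    ∑ y : F, (if y ^ 3 = x then 1 else 0 : ℤ) = 1 + cubicTrace x := by
  rcases eq_or_ne x 0 with rfl | hx
  · simp
  by_cases h : x ^ ((Fintype.card F - 1) / 3) = 1
  · obtain ⟨w, hw, rfl⟩ := exists_cube_eq_of_pow_eq_one h3 hx h
    obtain ⟨ω, hω, hω3⟩ := exists_cube_root_of_unity h3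
    have hω0 : ω ≠ 0 := by rintro rfl; simp at hω3
    have hω2 : ω ^ 2 + ω + 1 = 0 :=
      (mul_eq_zero.1 (show (ω - 1) * (ω ^ 2 + ω + 1) = 0 by linear_combination hω3)).resolve_left
        (sub_ne_zero.2 hω)
    have e : (Finset.univ.filter fun y : F => y ^ 3 = w ^ 3) = {w, w * ω, w * ω ^ 2} := by
      ext y
      simp only [Finset.mem_filter, Finset.mem_univ, true_and, Finset.mem_insert,
        Finset.mem_singleton]
      rw [← sub_eq_zero, ← sub_eq_zero (b := w), ← sub_eq_zero (b := w * ω),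
        ← sub_eq_zero (b := w * ω ^ 2), ← mul_eq_zero, ← mul_eq_zero]
      apply Eq.congr_left
      linear_combination (w * y ^ 2 - w ^ 2 * ω * y) * hω2 + (w ^ 3 ) * hω3
    rw [Finset.sum_boole, e, cubicTrace, if_neg hx, if_pos h, Finset.card_eq_three.2
      ⟨w, w * ω, w * ω ^ 2, ?_, ?_, ?_, rfl⟩]
    · norm_num
    · intro h; exact hω (mul_left_cancel₀ hw (by rw [← h, mul_one]))
    · intro h
      have : ω ^ 2 = 1 := mul_left_cancel₀ hw (by rw [← h, mul_one])
      exact hω (by linear_combination hω3 - ω * this)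
    · intro h
      have := mul_left_cancel₀ hw h
      exact hω (mul_left_cancel₀ hω0 (by rw [mul_one]; linear_combination -this))
  · rw [cubicTrace, if_neg hx, if_neg h]
    refine Finset.sum_eq_zero fun y _ => if_neg ?_
    rintro rfl
    refine h ?_
    rw [← pow_mul, mul_comm, pow_mul]
    exact pow_card_sub_one_div_three_pow h3 (by rintro rfl; simp at hx)

theorem sum_cubicTrace_linear (h3 : 3 ∣ Fintype.card F - 1) {a : F} (ha : a ≠ 0) (b : F) :
    ∑ x : F, cubicTrace (a * x + b) = 0 := by
  have h : ∑ x : F, (1 + cubicTrace x) = Fintype.card F := by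
    simp_rw [← sum_ite_cube_eq h3]
    rw [Finset.sum_comm]
    simp
  rw [Finset.sum_add_distrib] at h
  simp only [Finset.sum_const, Finset.card_univ, nsmul_eq_mul, mul_one, add_eq_left] at h
  rw [← h]
  exact Fintype.sum_equiv ((Equiv.mulLeft₀ a ha).trans (Equiv.addRight b)) _ _ fun x => by simp

theorem sum_cubicTrace_sub_mul_sub_sq (h3 : 3 ∣ Fintype.card F - 1) {a b : F} (hab : a ≠ b) :
    ∑ x : F, cubicTrace ((x - a) * (x - b) ^ 2) = -2 := by
  have h : ∀ z : F, cubicTrace ((b + z⁻¹ - a) * (b + z⁻¹ - b) ^ 2) =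
      cubicTrace ((b - a) * z + 1) - if z = 0 then 2 else 0 := by
    intro z
    rcases eq_or_ne z 0 with rfl | hz
    · simp
    · rw [← cubicTrace_cube_mul h3 hz, if_neg hz, sub_zero]
      congr 1; field_simp; ring
  rw [sum_eq_sum_add_inv b, Finset.sum_congr rfl fun z _ => h z, Finset.sum_sub_distrib,
    sum_cubicTrace_linear h3 (sub_ne_zero.2 hab.symm)]
  simp

theorem abs_sum_cubicTrace_quadratic_le (hF : ringChar F ≠ 2) (h3 : 3 ∣ Fintype.card F - 1)
    {k : F} (hk : k ≠ 0) (b c : F) :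
    |∑ x : F, cubicTrace (k * x ^ 2 + b * x + c)| ≤ hasseBound F := by
  have h2 : (2 : F) ≠ 0 := Ring.two_ne_zero hF
  have h : ∑ x : F, (1 + cubicTrace (k * x ^ 2 + b * x + c)) =
      ∑ y : F, (1 + quadraticChar F (2 ^ 2 * k * y ^ 3 + 0 * y ^ 2 + 0 * y +
        (b ^ 2 - 4 * k * c))) := by
    simp_rw [← sum_ite_cube_eq h3]
    rw [Finset.sum_comm]
    refine Finset.sum_congr rfl fun y _ => ?_
    rw [show 2 ^ 2 * k * y ^ 3 + 0 * y ^ 2 + 0 * y + (b ^ 2 - 4 * k * c) =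
      b ^ 2 - 4 * k * (c - y ^ 3) by ring, ← sum_ite_quadratic_eq_zero hF hk]
    refine Finset.sum_congr rfl fun x _ => ?_
    congr 1
    rw [eq_iff_iff]
    constructor <;> intro h <;> linear_combination -h
  rw [Finset.sum_add_distrib, Finset.sum_add_distrib, add_right_inj] at h
  rw [h]
  exact abs_sum_quadraticChar_cubic_le hF (mul_ne_zero (pow_ne_zero 2 h2) hk) _ _ _

theorem abs_sum_cubicTrace_mul_mul_le (hF : ringChar F ≠ 2) (h3 : 3 ∣ Fintype.card F - 1)
    {a b c : F} (hab : a ≠ b) (hac : a ≠ c) :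
    |∑ x : F, cubicTrace ((x - a) * (x - b) * (x - c))| ≤ hasseBound F + 2 := by
  have h : ∀ z : F, cubicTrace ((a + z⁻¹ - a) * (a + z⁻¹ - b) * (a + z⁻¹ - c)) =
      cubicTrace ((a - b) * (a - c) * z ^ 2 + (a - b + (a - c)) * z + 1) -
        if z = 0 then 2 else 0 := by
    intro z
    rcases eq_or_ne z 0 with rfl | hz
    · simp
    · rw [← cubicTrace_cube_mul h3 hz, if_neg hz, sub_zero]
      congr 1; field_simp; ring
  rw [sum_eq_sum_add_inv a, Finset.sum_congr rfl fun z _ => h z, Finset.sum_sub_distrib]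
  have := abs_le.1 (abs_sum_cubicTrace_quadratic_le hF h3
    (mul_ne_zero (sub_ne_zero.2 hab) (sub_ne_zero.2 hac)) (a - b + (a - c)) 1)
  simp only [Finset.sum_ite_eq', Finset.mem_univ, if_true]
  rw [abs_le]
  constructor <;> linarith

theorem sum_quadraticChar_quadratic (hF : ringChar F ≠ 2) {b c : F} (h : b ^ 2 - 4 * c ≠ 0) :
    ∑ x : F, quadraticChar F (x ^ 2 + b * x + c) = -1 := by
  have h2 : (2 : F) ≠ 0 := Ring.two_ne_zero hF
  set d : F := (b ^ 2 - 4 * c) / (2 ^ 2 * 2 ^ 2) with hd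
  have hd0 : d ≠ 0 := div_ne_zero h (mul_ne_zero (pow_ne_zero 2 h2) (pow_ne_zero 2 h2))
  have hd' : (2 ^ 2 * 2 ^ 2) * d = b ^ 2 - 4 * c :=
    mul_div_cancel₀ _ (mul_ne_zero (pow_ne_zero 2 h2) (pow_ne_zero 2 h2))
  have h1 : ∑ v : F, (1 + quadraticChar F ((-v) ^ 2 - 4 * 1 * d)) = Fintype.card F - 1 := by
    simp_rw [← sum_ite_quadratic_eq_zero hF one_ne_zero]
    rw [Finset.sum_comm]
    have : ∀ x : F, ∑ v : F, (if 1 * x ^ 2 + -v * x + d = 0 then 1 else 0 : ℤ) =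
        1 - if x = 0 then 1 else 0 := by
      intro x
      rcases eq_or_ne x 0 with rfl | hx
      · simp [hd0]
      · have e : ∀ v : F, 1 * x ^ 2 + -v * x + d = 0 ↔ v = x + d / x := by
          intro v
          constructor
          · intro h; field_simp; linear_combination -h
          · rintro rfl; field_simp; ring
        simp only [e]
        simp [hx]
    rw [Finset.sum_congr rfl fun x _ => this x, Finset.sum_sub_distrib]
    simp
  rw [Finset.sum_add_distrib] at h1
  simp only [Finset.sum_const, Finset.card_univ, nsmul_eq_mul, mul_one] at h1
  have h4 : ∑ x : F, quadraticChar F (x ^ 2 + b * x + c) =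
      ∑ v : F, quadraticChar F ((-v) ^ 2 - 4 * 1 * d) := by
    refine Fintype.sum_equiv (Equiv.addRight (b / 2)) _ _ fun x => ?_
    rw [Equiv.coe_addRight, ← quadraticChar_sq_mul h2, ← quadraticChar_sq_mul h2 ((-_) ^ 2 - _)]
    congr 1
    field_simp
    linear_combination hd'
  rw [h4, mul_one]
  linarith

end CubicTrace

section CubicCover

variable {F : Type*} [Field F] [Fintype F] [DecidableEq F]

theorem sum_comp_mul_cube (h3 : 3 ∣ Fintype.card F - 1) {k : F} (hk : k ≠ 0) (φ : F → ℤ) :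
    ∑ y : F, φ (k * y ^ 3) = ∑ x : F, φ x + ∑ x : F, φ x * cubicTrace (k ^ 2 * x) := by
  have h : ∀ x : F, φ x + φ x * cubicTrace (k ^ 2 * x) =
      ∑ y : F, φ x * (if x = k * y ^ 3 then 1 else 0) := by
    intro x
    rw [← Finset.mul_sum, show k ^ 2 * x = k ^ 3 * (x / k) by field_simp,
      cubicTrace_cube_mul h3 hk, ← mul_one_add, ← sum_ite_cube_eq h3]
    congr 1
    refine Finset.sum_congr rfl fun y _ => ?_
    congr 1
    rw [eq_iff_iff, eq_div_iff hk, eq_comm, mul_comm]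
  rw [← Finset.sum_add_distrib, Finset.sum_congr rfl fun x _ => h x, Finset.sum_comm]
  simp

/-- The twisted sum `∑ η(x² + bx + 1) χ(kx)` is invariant under `k ↦ k²`. -/
theorem sum_quadraticChar_mul_cubicTrace_sq (h3 : 3 ∣ Fintype.card F - 1) (b k : F) :
    ∑ x : F, quadraticChar F (x ^ 2 + b * x + 1) * cubicTrace (k ^ 2 * x) =
      ∑ x : F, quadraticChar F (x ^ 2 + b * x + 1) * cubicTrace (k * x) := by
  refine Fintype.sum_equiv (Equiv.inv F) _ _ fun x => ?_
  rw [Equiv.inv_apply]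
  rcases eq_or_ne x 0 with rfl | hx
  · simp
  congr 1
  · rw [← quadraticChar_sq_mul hx (x⁻¹ ^ 2 + _ + 1)]
    congr 1; field_simp; ring
  · rw [← cubicTrace_sq h3 (k * _), ← cubicTrace_cube_mul h3 hx ((k * _) ^ 2)]
    congr 1; field_simp

theorem abs_sum_quadraticChar_mul_cubicTrace_le (h3 : 3 ∣ Fintype.card F - 1) (b : F)
    {k : F} (hk : k ≠ 0) :
    |∑ x : F, quadraticChar F (x ^ 2 + b * x + 1) * cubicTrace (k * x)| ≤
      |∑ x : F, quadraticChar F (x ^ 2 + b * x + 1) * cubicTrace x| := by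
  have h : (∑ x : F, quadraticChar F (x ^ 2 + b * x + 1) * cubicTrace x) * cubicTrace k =
      2 * ∑ x : F, quadraticChar F (x ^ 2 + b * x + 1) * cubicTrace (k * x) := by
    rw [Finset.sum_mul, two_mul]
    nth_rw 2 [← sum_quadraticChar_mul_cubicTrace_sq h3]
    rw [← Finset.sum_add_distrib]
    refine Finset.sum_congr rfl fun x _ => ?_
    rw [mul_assoc, cubicTrace_mul h3, mul_add, mul_comm k, mul_comm (k ^ 2)]
  have h' := congrArg abs h
  rw [abs_mul, abs_mul, abs_two] at h'
  rcases cubicTrace_of_ne_zero hk with hk' | hk' <;> rw [hk'] at h'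
  · rw [abs_two] at h'; linarith
  · rw [abs_neg, abs_one] at h'
    linarith [abs_nonneg (∑ x : F, quadraticChar F (x ^ 2 + b * x + 1) * cubicTrace x),
      abs_nonneg (∑ x : F, quadraticChar F (x ^ 2 + b * x + 1) * cubicTrace (k * x))]

theorem abs_sum_quadraticChar_sextic_le (hF : ringChar F ≠ 2) {M : F} (h1 : M ≠ 1)
    (h1' : M ≠ -1) :
    |∑ y : F, quadraticChar F ((y ^ 3) ^ 2 + 2 * M * y ^ 3 + 1)| ≤ 2 * hasseBound F + 3 := by
  have h2 : (2 : F) ≠ 0 := Ring.two_ne_zero hF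
  have h : ∀ y : F, quadraticChar F ((y ^ 3) ^ 2 + 2 * M * y ^ 3 + 1) =
      quadraticChar F y * quadraticChar F ((y + 1 ^ 2 / y) ^ 3 - 3 * (y + 1 ^ 2 / y) + 2 * M) +
        if y = 0 then 1 else 0 := by
    intro y
    rcases eq_or_ne y 0 with rfl | hy
    · simp
    rw [if_neg hy, add_zero, ← map_mul, ← quadraticChar_sq_mul hy (y * _)]
    congr 1; field_simp; ring
  rw [Finset.sum_congr rfl fun y _ => h y, Finset.sum_add_distrib,
    sum_quadraticChar_mul_comp_add_div hF one_ne_zero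
      (fun v => quadraticChar F (v ^ 3 - 3 * v + 2 * M))]
  have e : ∀ v : F, (quadraticChar F (v + 2 * 1) + quadraticChar F (v - 2 * 1)) *
      quadraticChar F (v ^ 3 - 3 * v + 2 * M) =
      quadraticChar F ((v - (-2)) * (v ^ 3 + 0 * v ^ 2 + (-3) * v + 2 * M)) +
      quadraticChar F ((v - 2) * (v ^ 3 + 0 * v ^ 2 + (-3) * v + 2 * M)) := by
    intro v
    rw [add_mul, ← map_mul, ← map_mul]
    congr 2 <;> ring
  rw [Finset.sum_congr rfl fun v _ => e v, Finset.sum_add_distrib]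
  have b1 : (-2 : F) ^ 3 + 0 * (-2) ^ 2 + (-3) * (-2) + 2 * M ≠ 0 := by
    rw [show (-2 : F) ^ 3 + 0 * (-2) ^ 2 + (-3) * (-2) + 2 * M = 2 * (M - 1) by ring]
    exact mul_ne_zero h2 (sub_ne_zero.2 h1)
  have b2 : (2 : F) ^ 3 + 0 * 2 ^ 2 + (-3) * 2 + 2 * M ≠ 0 := by
    rw [show (2 : F) ^ 3 + 0 * 2 ^ 2 + (-3) * 2 + 2 * M = 2 * (M - (-1)) by ring]
    exact mul_ne_zero h2 (sub_ne_zero.2 h1')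
  have := abs_le.1 (abs_sum_quadraticChar_quartic_le hF b1)
  have := abs_le.1 (abs_sum_quadraticChar_quartic_le hF b2)
  simp only [Finset.sum_ite_eq', Finset.mem_univ, if_true]
  rw [abs_le]
  constructor <;> linarith

theorem abs_sum_cubicTrace_mul_mul_sq_le (hF : ringChar F ≠ 2) (h3 : 3 ∣ Fintype.card F - 1)
    {a b c : F} (hab : a ≠ b) (hac : a ≠ c) (hbc : b ≠ c) :
    |∑ x : F, cubicTrace ((x - a) * (x - b) * (x - c) ^ 2)| ≤ 2 * hasseBound F + 4 := by
  have h2 : (2 : F) ≠ 0 := Ring.two_ne_zero hF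
  have hd : a - b ≠ 0 := sub_ne_zero.2 hab
  set M : F := (a + b - 2 * c) / (a - b) with hM
  have hM' : M * (a - b) = a + b - 2 * c := div_mul_cancel₀ _ hd
  have hM1 : M ≠ 1 := by
    intro h
    rw [h] at hM'
    exact hbc (mul_left_cancel₀ h2 (by linear_combination -hM'))
  have hM1' : M ≠ -1 := by
    intro h
    rw [h] at hM'
    exact hac (mul_left_cancel₀ h2 (by linear_combination -hM'))
  have hQ : ∑ x : F, quadraticChar F (x ^ 2 + 2 * M * x + 1) = -1 := by
    refine sum_quadraticChar_quadratic hF ?_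
    rw [show (2 * M) ^ 2 - 4 * 1 = 2 ^ 2 * ((M - 1) * (M - (-1))) by ring]
    exact mul_ne_zero (pow_ne_zero 2 h2) (mul_ne_zero (sub_ne_zero.2 hM1) (sub_ne_zero.2 hM1'))
  have hc : ∀ x : F, 1 + cubicTrace ((x - a) * (x - b) * (x - c) ^ 2) =
      ∑ t : F, (if 1 * x ^ 2 + -(a + b + t ^ 3) * x + (a * b + t ^ 3 * c) = 0 then 1 else 0 : ℤ) +
        if x = c then 1 else 0 := by
    intro x
    rcases eq_or_ne x c with rfl | hx
    · have : ∀ t : F, 1 * x ^ 2 + -(a + b + t ^ 3) * x + (a * b + t ^ 3 * x) ≠ 0 := by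
        intro t
        rw [show 1 * x ^ 2 + -(a + b + t ^ 3) * x + (a * b + t ^ 3 * x) = (a - x) * (b - x) by ring]
        exact mul_ne_zero (sub_ne_zero.2 hac) (sub_ne_zero.2 hbc)
      simp only [this]
      simp
    · have hx' : x - c ≠ 0 := sub_ne_zero.2 hx
      rw [if_neg hx, add_zero, ← sum_ite_cube_eq h3]
      refine (Fintype.sum_equiv (Equiv.mulLeft₀ (x - c) hx') _ _ fun t => ?_).symm
      rw [Equiv.mulLeft₀_apply]
      congr 1
      rw [eq_iff_iff, ← sub_eq_zero (b := (x - a) * (x - b) * (x - c) ^ 2),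
        show ((x - c) * t) ^ 3 - (x - a) * (x - b) * (x - c) ^ 2 =
          (-(x - c) ^ 2) * (1 * x ^ 2 + -(a + b + t ^ 3) * x + (a * b + t ^ 3 * c)) by ring,
        mul_eq_zero, or_iff_right (neg_ne_zero.2 (pow_ne_zero 2 hx'))]
  have hsum : ∑ x : F, (1 + cubicTrace ((x - a) * (x - b) * (x - c) ^ 2)) =
      ∑ t : F, (1 + quadraticChar F (((a - b)⁻¹ * t ^ 3) ^ 2 + 2 * M * ((a - b)⁻¹ * t ^ 3) + 1)) +
        1 := by
    rw [Finset.sum_congr rfl fun x _ => hc x, Finset.sum_add_distrib, Finset.sum_comm]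
    congr 1
    · refine Finset.sum_congr rfl fun t _ => ?_
      rw [sum_ite_quadratic_eq_zero hF one_ne_zero, ← quadraticChar_sq_mul hd (_ + 1)]
      congr 2
      field_simp
      linear_combination -2 * t ^ 3 * hM'
    · simp
  rw [Finset.sum_add_distrib, Finset.sum_add_distrib,
    sum_comp_mul_cube h3 (inv_ne_zero hd) (fun x => quadraticChar F (x ^ 2 + 2 * M * x + 1)),
    hQ, sum_quadraticChar_mul_cubicTrace_sq h3] at hsum
  have h1 := sum_comp_mul_cube h3 one_ne_zero (fun x => quadraticChar F (x ^ 2 + 2 * M * x + 1))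
  simp only [one_mul, one_pow] at h1
  rw [hQ] at h1
  have hE := abs_sum_quadraticChar_mul_cubicTrace_le h3 (2 * M) (inv_ne_zero hd)
  have hS := abs_sum_quadraticChar_sextic_le hF hM1 hM1'
  rw [h1] at hS
  rw [show ∑ x : F, cubicTrace ((x - a) * (x - b) * (x - c) ^ 2) =
    ∑ x : F, quadraticChar F (x ^ 2 + 2 * M * x + 1) * cubicTrace ((a - b)⁻¹ * x) by linarith]
  refine hE.trans ?_
  have := abs_le.1 hS
  rw [abs_le]
  constructor <;> linarith

theorem le_sum_cubicTrace_pair (hF : ringChar F ≠ 2) (h3 : 3 ∣ Fintype.card F - 1) {a b : F}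
    (hab : a ≠ b) :
    -(hasseBound F + 2) ≤ ∑ x : F, cubicTrace (x - a) * cubicTrace (x - b) := by
  simp_rw [cubicTrace_mul h3]
  rw [Finset.sum_add_distrib, sum_cubicTrace_sub_mul_sub_sq h3 hab]
  have := abs_le.1 (abs_sum_cubicTrace_quadratic_le hF h3 one_ne_zero (-(a + b)) (a * b))
  have e : ∑ x : F, cubicTrace ((x - a) * (x - b)) =
      ∑ x : F, cubicTrace (1 * x ^ 2 + -(a + b) * x + a * b) :=
    Finset.sum_congr rfl fun x _ => by congr 1; ring
  rw [e]
  linarith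

theorem sum_cubicTrace_triple_le (hF : ringChar F ≠ 2) (h3 : 3 ∣ Fintype.card F - 1) {a b c : F}
    (hab : a ≠ b) (hac : a ≠ c) (hbc : b ≠ c) :
    ∑ x : F, cubicTrace (x - a) * cubicTrace (x - b) * cubicTrace (x - c) ≤
      7 * hasseBound F + 14 := by
  have e : ∀ x : F, cubicTrace (x - a) * cubicTrace (x - b) * cubicTrace (x - c) =
      cubicTrace ((x - a) * (x - b) * (x - c)) + cubicTrace ((x - a) * (x - b) * (x - c) ^ 2) +
      cubicTrace ((x - a) * (x - c) * (x - b) ^ 2) +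
      cubicTrace ((x - b) * (x - c) * (x - a) ^ 2) := by
    intro x
    rw [cubicTrace_mul h3, add_mul, cubicTrace_mul h3, cubicTrace_mul h3,
      show (x - a) * (x - b) ^ 2 * (x - c) ^ 2 = (x - a) * ((x - b) * (x - c)) ^ 2 by ring,
      cubicTrace_mul_sq_comm h3 (x - a),
      show (x - a) * (x - b) ^ 2 * (x - c) = (x - a) * (x - c) * (x - b) ^ 2 by ring]
    ring
  rw [Finset.sum_congr rfl fun x _ => e x]
  simp only [Finset.sum_add_distrib]
  linarith [(abs_le.1 (abs_sum_cubicTrace_mul_mul_le hF h3 hab hac)).2,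
    (abs_le.1 (abs_sum_cubicTrace_mul_mul_sq_le hF h3 hab hac hbc)).2,
    (abs_le.1 (abs_sum_cubicTrace_mul_mul_sq_le hF h3 hac hab hbc.symm)).2,
    (abs_le.1 (abs_sum_cubicTrace_mul_mul_sq_le hF h3 hbc hab.symm hac.symm)).2]

/-- A cubic polynomial weight that is nonpositive at points of `{2, -1}⁵` other than
`(-1, -1, -1, -1, -1)`. -/
def cubicWeight (a b c d e : ℤ) : ℤ :=
  4 - 4 * (a + b + c + d + e) +
    2 * (a * b + a * c + a * d + a * e + b * c + b * d + b * e + c * d + c * e + d * e) -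
    (a * b * c + a * b * d + a * b * e + a * c * d + a * c * e + a * d * e + b * c * d +
      b * c * e + b * d * e + c * d * e)

theorem cubicWeight_le {a b c d e : ℤ} (ha : a ∈ ({0, 2, -1} : Finset ℤ))
    (hb : b ∈ ({0, 2, -1} : Finset ℤ)) (hc : c ∈ ({0, 2, -1} : Finset ℤ))
    (hd : d ∈ ({0, 2, -1} : Finset ℤ)) (he : e ∈ ({0, 2, -1} : Finset ℤ)) :
    cubicWeight a b c d e ≤ 54 := by
  have h : ∀ a ∈ ({0, 2, -1} : Finset ℤ), ∀ b ∈ ({0, 2, -1} : Finset ℤ),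
      ∀ c ∈ ({0, 2, -1} : Finset ℤ), ∀ d ∈ ({0, 2, -1} : Finset ℤ),
      ∀ e ∈ ({0, 2, -1} : Finset ℤ), cubicWeight a b c d e ≤ 54 := by
    decide
  exact h a ha b hb c hc d hd e he

theorem cubicWeight_nonpos {a b c d e : ℤ} (ha : a = 2 ∨ a = -1) (hb : b = 2 ∨ b = -1)
    (hc : c = 2 ∨ c = -1) (hd : d = 2 ∨ d = -1) (he : e = 2 ∨ e = -1)
    (h : ¬(a = -1 ∧ b = -1 ∧ c = -1 ∧ d = -1 ∧ e = -1)) : cubicWeight a b c d e ≤ 0 := by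
  rcases ha with rfl | rfl <;> rcases hb with rfl | rfl <;> rcases hc with rfl | rfl <;>
    rcases hd with rfl | rfl <;> rcases he with rfl | rfl <;> revert h <;> decide

theorem exists_forall_cubicTrace_eq (hF : ringChar F ≠ 2) (h3 : 3 ∣ Fintype.card F - 1)
    (hq : 2809 < Fintype.card F) {f : Fin 5 → F} (hf : Function.Injective f) :
    ∃ x : F, ∀ i, cubicTrace (x - f i) = -1 := by
  by_contra! h
  set W : F → ℤ := fun x => cubicWeight (cubicTrace (x - f 0)) (cubicTrace (x - f 1))
    (cubicTrace (x - f 2)) (cubicTrace (x - f 3)) (cubicTrace (x - f 4)) with hW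
  have hle : ∀ x, W x ≤ 54 := fun x => cubicWeight_le (cubicTrace_mem _) (cubicTrace_mem _)
    (cubicTrace_mem _) (cubicTrace_mem _) (cubicTrace_mem _)
  have hnp : ∀ x ∉ Finset.univ.image f, W x ≤ 0 := by
    intro x hx
    have hne : ∀ i, x - f i ≠ 0 := fun i h => hx
      (Finset.mem_image.2 ⟨i, Finset.mem_univ _, (sub_eq_zero.1 h).symm⟩)
    have hm := fun i => cubicTrace_of_ne_zero (hne i)
    refine cubicWeight_nonpos (hm 0) (hm 1) (hm 2) (hm 3) (hm 4) ?_
    rintro ⟨h0, h1, h2, h3, h4⟩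
    obtain ⟨i, hi⟩ := h x
    fin_cases i <;> exact hi ‹_›
  have hup : ∑ x, W x ≤ 270 := by
    rw [← Finset.sum_add_sum_compl (Finset.univ.image f)]
    have h1 := Finset.sum_le_card_nsmul (Finset.univ.image f) W 54 fun x _ => hle x
    rw [Finset.card_image_of_injective _ hf] at h1
    have h2 := Finset.sum_nonpos (s := (Finset.univ.image f)ᶜ) (f := W)
      fun x hx => hnp x (Finset.mem_compl.1 hx)
    simp at h1
    linarith
  have hne : ∀ i j, i ≠ j → f i ≠ f j := fun i j => hf.ne
  have hp := fun i j (hij : i ≠ j) => le_sum_cubicTrace_pair hF h3 (hne i j hij)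
  have ht := fun i j k (hij : i ≠ j) (hik : i ≠ k) (hjk : j ≠ k) =>
    sum_cubicTrace_triple_le hF h3 (hne i j hij) (hne i k hik) (hne j k hjk)
  have hs : ∀ a : F, ∑ x : F, cubicTrace (x - a) = 0 := fun a => by
    simpa [sub_eq_add_neg] using sum_cubicTrace_linear h3 one_ne_zero (-a)
  simp only [hW, cubicWeight, Finset.sum_add_distrib, Finset.sum_sub_distrib, ← Finset.mul_sum, hs,
    Finset.sum_const, Finset.card_univ, nsmul_eq_mul] at hup
  have key : 4 * (Fintype.card F : ℤ) ≤ 90 * hasseBound F + 450 := by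
    linarith [hp 0 1 (by decide), hp 0 2 (by decide), hp 0 3 (by decide), hp 0 4 (by decide),
      hp 1 2 (by decide), hp 1 3 (by decide), hp 1 4 (by decide), hp 2 3 (by decide),
      hp 2 4 (by decide), hp 3 4 (by decide),
      ht 0 1 2 (by decide) (by decide) (by decide), ht 0 1 3 (by decide) (by decide) (by decide),
      ht 0 1 4 (by decide) (by decide) (by decide), ht 0 2 3 (by decide) (by decide) (by decide),
      ht 0 2 4 (by decide) (by decide) (by decide), ht 0 3 4 (by decide) (by decide) (by decide),
      ht 1 2 3 (by decide) (by decide) (by decide), ht 1 2 4 (by decide) (by decide) (by decide),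
      ht 1 3 4 (by decide) (by decide) (by decide), ht 2 3 4 (by decide) (by decide) (by decide)]
  have hsq := hasseBound_sq_le F
  have hs0 := hasseBound_nonneg F
  have hq' : (2809 : ℤ) < Fintype.card F := by exact_mod_cast hq
  nlinarith

end CubicCover

section Incidence

variable {F : Type*} [Field F] [Fintype F] [DecidableEq F]

omit [DecidableEq F] in
theorem sum_sum_sum_line (H : Finset F) (c : F → ℤ) :
    ∑ m : F, ∑ b : F, ∑ h ∈ H, c (m * h + b) = Fintype.card F * (H.card * ∑ x, c x) := by
  have h1 : ∀ m : F, ∑ b : F, ∑ h ∈ H, c (m * h + b) = H.card * ∑ x, c x := by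
    intro m
    rw [Finset.sum_comm, ← nsmul_eq_mul]
    exact Finset.sum_eq_card_nsmul fun h _ =>
      Fintype.sum_equiv (Equiv.addLeft (m * h)) _ _ fun b => rfl
  simp [h1]

theorem sum_sum_line_mul_line (c : F → ℤ) (h h' : F) :
    ∑ m : F, ∑ b : F, c (m * h + b) * c (m * h' + b) =
      if h = h' then Fintype.card F * ∑ x, c x ^ 2 else (∑ x, c x) ^ 2 := by
  have h1 : ∀ m : F, ∑ b : F, c (m * h + b) * c (m * h' + b) =
      ∑ x : F, c x * c (m * (h' - h) + x) := fun m =>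
    Fintype.sum_equiv (Equiv.addLeft (m * h)) _ _ fun b => by
      simp only [Equiv.coe_addLeft]
      congr 2; ring
  rw [Finset.sum_congr rfl fun m _ => h1 m]
  split_ifs with hh
  · subst hh
    simp [sq]
  · rw [Finset.sum_comm, sq, Finset.sum_mul]
    refine Finset.sum_congr rfl fun x _ => ?_
    rw [← Finset.mul_sum]
    congr 1
    exact Fintype.sum_equiv ((Equiv.mulRight₀ (h' - h) (sub_ne_zero.2 (Ne.symm hh))).trans
      (Equiv.addRight x)) _ _ fun m => rfl

theorem sum_sum_sum_line_sq (H : Finset F) (c : F → ℤ) :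
    ∑ m : F, ∑ b : F, (∑ h ∈ H, c (m * h + b)) ^ 2 =
      H.card * (Fintype.card F * ∑ x, c x ^ 2) + H.card * (H.card - 1) * (∑ x, c x) ^ 2 := by
  simp only [sq (∑ h ∈ H, _), Finset.sum_mul_sum, Finset.sum_comm (s := Finset.univ) (t := H),
    sum_sum_line_mul_line]
  have h1 : ∀ h ∈ H, ∑ h' ∈ H, (if h = h' then (Fintype.card F : ℤ) * ∑ x, c x ^ 2
      else (∑ x, c x) ^ 2) = Fintype.card F * ∑ x, c x ^ 2 +
        (H.card - 1) * (∑ x, c x) ^ 2 := by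
    intro h hh
    have : ∀ h', (if h = h' then (Fintype.card F : ℤ) * ∑ x, c x ^ 2 else (∑ x, c x) ^ 2) =
        (∑ x, c x) ^ 2 + if h = h' then Fintype.card F * ∑ x, c x ^ 2 - (∑ x, c x) ^ 2 else 0 := by
      intro h'
      split_ifs <;> ring
    rw [Finset.sum_congr rfl fun h' _ => this h', Finset.sum_add_distrib]
    simp only [Finset.sum_const, nsmul_eq_mul, Finset.sum_ite_eq, hh, if_true]
    ring
  rw [Finset.sum_congr rfl h1]
  simp only [Finset.sum_const, nsmul_eq_mul]
  ring

theorem sq_card_sq_sub_le {H : Finset F} (h0 : (0 : F) ∉ H) (hne : H.Nonempty)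
    (hmul : ∀ x ∈ H, ∀ y ∈ H, x * y ∈ H) (hinv : ∀ x ∈ H, x⁻¹ ∈ H) :
    ((Fintype.card F : ℤ) * (H.filter fun x => x + 1 ∈ H).card - H.card ^ 2) ^ 2 ≤
      (Fintype.card F : ℤ) ^ 3 := by
  set q : ℤ := ((Fintype.card F : ℕ) : ℤ) with hq
  set N : ℤ := (H.card : ℤ) with hN
  set c : F → ℤ := fun x => if x ∈ H then 1 else 0 with hc
  set f : ℤ := ((H.filter fun x => x + 1 ∈ H).card : ℤ) with hf
  have hc1 : ∑ x, c x = N := by simp [hc, hN]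
  have hc2 : ∑ x, c x ^ 2 = N := by simp [hc, hN]
  have hI : ∀ m ∈ H, ∀ b ∈ H, ∑ h ∈ H, c (m * h + b) = f := by
    intro m hm b hb
    have hm0 : m ≠ 0 := fun h => h0 (h ▸ hm)
    have hb0 : b ≠ 0 := fun h => h0 (h ▸ hb)
    rw [hf, Finset.card_filter, Nat.cast_sum]
    refine Finset.sum_bij' (fun h _ => b⁻¹ * m * h) (fun h _ => m⁻¹ * b * h)
      (fun h hh => hmul _ (hmul _ (hinv _ hb) _ hm) _ hh)
      (fun h hh => hmul _ (hmul _ (hinv _ hm) _ hb) _ hh)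
      (fun h _ => by field_simp) (fun h _ => by field_simp) (fun h _ => ?_)
    have : m * h + b ∈ H ↔ b⁻¹ * m * h + 1 ∈ H := by
      constructor
      · intro h'
        convert hmul _ (hinv _ hb) _ h' using 1
        field_simp
      · intro h'
        convert hmul _ hb _ h' using 1
        field_simp
    simp [hc, this]
  have hall : ∑ m : F, ∑ b : F, (q * ∑ h ∈ H, c (m * h + b) - N ^ 2) ^ 2 =
      q ^ 2 * (q * N ^ 2 - N ^ 3) := by
    have e : ∀ m b : F, (q * ∑ h ∈ H, c (m * h + b) - N ^ 2) ^ 2 =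
        q ^ 2 * (∑ h ∈ H, c (m * h + b)) ^ 2 - 2 * q * N ^ 2 * ∑ h ∈ H, c (m * h + b) + N ^ 4 :=
      fun m b => by ring
    simp only [e, Finset.sum_add_distrib, Finset.sum_sub_distrib, ← Finset.mul_sum,
      sum_sum_sum_line, sum_sum_sum_line_sq, hc1, hc2, Finset.sum_const, Finset.card_univ,
      nsmul_eq_mul, ← hq, ← hN]
    ring
  have hpart : ∑ m ∈ H, ∑ b ∈ H, (q * ∑ h ∈ H, c (m * h + b) - N ^ 2) ^ 2 =
      N ^ 2 * (q * f - N ^ 2) ^ 2 := by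
    rw [Finset.sum_congr rfl fun m hm => Finset.sum_congr rfl fun b hb => by rw [hI m hm b hb]]
    simp only [Finset.sum_const, nsmul_eq_mul, ← hN]
    ring
  have hle : ∑ m ∈ H, ∑ b ∈ H, (q * ∑ h ∈ H, c (m * h + b) - N ^ 2) ^ 2 ≤
      ∑ m : F, ∑ b : F, (q * ∑ h ∈ H, c (m * h + b) - N ^ 2) ^ 2 :=
    (Finset.sum_le_sum fun m _ => Finset.sum_le_univ_sum_of_nonneg fun b => sq_nonneg _).trans
      (Finset.sum_le_univ_sum_of_nonneg fun m => Finset.sum_nonneg fun b _ => sq_nonneg _)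
  rw [hall, hpart] at hle
  have hN0 : 0 < N := by rw [hN]; exact_mod_cast hne.card_pos
  have h3 : 0 ≤ q ^ 2 * N ^ 3 := by positivity
  refine le_of_mul_le_mul_left ?_ (pow_pos hN0 2)
  linarith

end Incidence

section Potent

variable {F : Type*} [Field F] [Fintype F] [DecidableEq F]

theorem card_filter_pow_eq_self_le {n : ℕ} (hn : 1 < n) :
    (Finset.univ.filter fun a : F => a ^ n = a).card ≤ n := by
  have h0 : (X ^ n - X : F[X]) ≠ 0 := FiniteField.X_pow_card_sub_X_ne_zero F hn
  refine (Finset.card_le_card (t := (X ^ n - X : F[X]).roots.toFinset) fun a ha => ?_).trans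
    ((Multiset.toFinset_card_le _).trans ((card_roots' _).trans_eq
      (FiniteField.X_pow_card_sub_X_natDegree_eq F hn)))
  simpa [h0, sub_eq_zero] using ha

omit [DecidableEq F] in
theorem card_le_card_mul_card_of_forall_exists_add {A B : Finset F}
    (h : ∀ x, ∃ a ∈ A, ∃ b ∈ B, a + b = x) : Fintype.card F ≤ A.card * B.card := by
  rw [← Finset.card_univ, ← Finset.card_product]
  refine Finset.card_le_card_of_surjOn (fun p => p.1 + p.2) fun x _ => ?_
  obtain ⟨a, ha, b, hb, rfl⟩ := h x
  exact ⟨(a, b), by simp [ha, hb], rfl⟩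

/-- If `A + B` is everything and `0, 1 ∈ A`, then the overlap of `B` and `B + 1` is wasted. -/
theorem card_add_card_filter_le {A B : Finset F} (h : ∀ x, ∃ a ∈ A, ∃ b ∈ B, a + b = x)
    (h0 : (0 : F) ∈ A) (h1 : (1 : F) ∈ A) :
    Fintype.card F + (B.filter fun x => x + 1 ∈ B).card ≤ A.card * B.card := by
  set D : Finset (F × F) := (B.filter fun x => x + 1 ∈ B).image fun x => ((1 : F), x) with hD
  have hDc : D.card = (B.filter fun x => x + 1 ∈ B).card :=
    Finset.card_image_of_injective _ (Prod.mk_right_injective 1)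
  have hsub : D ⊆ A ×ˢ B := by
    intro p hp
    obtain ⟨x, hx, rfl⟩ := Finset.mem_image.1 hp
    simp [h1, (Finset.mem_filter.1 hx).1]
  have hle : Fintype.card F ≤ ((A ×ˢ B) \ D).card := by
    rw [← Finset.card_univ]
    refine Finset.card_le_card_of_surjOn (fun p => p.1 + p.2) fun x _ => ?_
    obtain ⟨a, ha, b, hb, rfl⟩ := h x
    by_cases hd : (a, b) ∈ D
    · obtain ⟨y, hy, hy'⟩ := Finset.mem_image.1 hd
      rw [Prod.mk.injEq] at hy'
      obtain ⟨rfl, rfl⟩ := hy'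
      refine ⟨(0, y + 1), ?_, by simp [add_comm]⟩
      rw [Finset.mem_coe, Finset.mem_sdiff, Finset.mem_product]
      refine ⟨⟨h0, (Finset.mem_filter.1 hy).2⟩, fun h' => ?_⟩
      obtain ⟨z, -, hz⟩ := Finset.mem_image.1 h'
      exact one_ne_zero (congrArg Prod.fst hz)
    · exact ⟨(a, b), by simp [ha, hb, hd], rfl⟩
  rw [Finset.card_sdiff_of_subset hsub, Finset.card_product] at hle
  have := Finset.card_le_card hsub
  rw [Finset.card_product] at this
  omega

omit [Fintype F] [DecidableEq F] in
theorem eq_zero_or_pow_sub_one_eq_one {n : ℕ} (hn : 1 < n) {b : F} (hb : b ^ n = b) :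
    b = 0 ∨ b ^ (n - 1) = 1 := by
  rw [or_iff_not_imp_left]
  intro hb0
  refine mul_right_cancel₀ hb0 ?_
  rw [← pow_succ, Nat.sub_add_cancel hn.le, hb, one_mul]

omit [Fintype F] [DecidableEq F] in
theorem pow_five_eq_self_iff {a : F} :
    a ^ 5 = a ↔ a = 0 ∨ a = 1 ∨ a = -1 ∨ a ^ 2 = -1 := by
  rw [← sub_eq_zero, show a ^ 5 - a = a * ((a - 1) * ((a - -1) * (a ^ 2 - -1))) by ring, mul_eq_zero,
    mul_eq_zero, mul_eq_zero, sub_eq_zero, sub_eq_zero, sub_eq_zero]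

theorem not_cover_of_index_even (hF : ringChar F ≠ 2) (hq : 2809 < Fintype.card F) {n k : ℕ}
    (hn : 1 < n) (hk : Fintype.card F - 1 = (n - 1) * (2 * k)) :
    ¬ ∀ γ : F, ∃ a b : F, a ^ 5 = a ∧ b ^ n = b ∧ a + b = γ := by
  intro h
  have hη : ∀ b : F, b ^ n = b → quadraticChar F b ≠ -1 := by
    intro b hb
    rcases eq_zero_or_pow_sub_one_eq_one hn hb with rfl | hb1
    · simp
    · have hb0 : b ≠ 0 := by rintro rfl; simp [zero_pow (Nat.sub_ne_zero_of_lt hn)] at hb1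
      have : quadraticChar F b = 1 := by
        rw [quadraticChar_one_iff_isSquare hb0, FiniteField.isSquare_iff hF hb0,
          show Fintype.card F / 2 = (n - 1) * k by rw [mul_left_comm] at hk; omega, pow_mul, hb1,
          one_pow]
      rw [this]; norm_num
  by_cases hi : ∃ i : F, i ^ 2 = -1
  · obtain ⟨i, hi⟩ := hi
    obtain ⟨x, hx⟩ := exists_forall_five_quadraticChar_eq hF hq hi
    obtain ⟨a, b, ha, hb, rfl⟩ := h x
    refine hη b hb ?_
    rw [← add_sub_cancel_left a b]
    refine hx a ?_
    have hai : a ^ 2 = -1 → a = i ∨ a = -i := fun h => sq_eq_sq_iff_eq_or_eq_neg.1 (h.trans hi.symm)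
    rw [pow_five_eq_self_iff] at ha
    simp only [Finset.mem_insert, Finset.mem_singleton]
    tauto
  · obtain ⟨x, hx⟩ := exists_forall_three_quadraticChar_eq hF hq
    obtain ⟨a, b, ha, hb, rfl⟩ := h x
    refine hη b hb ?_
    rw [← add_sub_cancel_left a b]
    refine hx a ?_
    rw [pow_five_eq_self_iff] at ha
    have := not_exists.1 hi a
    simpa [this] using ha

theorem not_cover_of_index_three (hF : ringChar F ≠ 2) (hq : 2809 < Fintype.card F) {n : ℕ}
    (hn : 1 < n) (hk : Fintype.card F - 1 = (n - 1) * 3) :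
    ¬ ∀ γ : F, ∃ a b : F, a ^ 5 = a ∧ b ^ n = b ∧ a + b = γ := by
  intro h
  obtain ⟨T, hT, hTc⟩ := Finset.exists_superset_card_eq
    (card_filter_pow_eq_self_le (F := F) (n := 5) (by norm_num)) (by omega)
  set f : Fin 5 → F := fun i => ((T.equivFinOfCardEq hTc).symm i : F) with hf
  have hinj : Function.Injective f :=
    Subtype.val_injective.comp (T.equivFinOfCardEq hTc).symm.injective
  have h3 : 3 ∣ Fintype.card F - 1 := Dvd.intro_left _ hk.symm
  obtain ⟨x, hx⟩ := exists_forall_cubicTrace_eq hF h3 hq hinj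
  obtain ⟨a, b, ha, hb, rfl⟩ := h x
  have haT : a ∈ T := hT (by simpa using ha)
  have hfa : f (T.equivFinOfCardEq hTc ⟨a, haT⟩) = a := by simp [hf]
  have hb' := hx (T.equivFinOfCardEq hTc ⟨a, haT⟩)
  rw [hfa, add_sub_cancel_left, cubicTrace, hk, Nat.mul_div_cancel _ (by norm_num)] at hb'
  rcases eq_zero_or_pow_sub_one_eq_one hn hb with hb1 | hb1
  · simp [hb1] at hb'
  · split_ifs at hb'

theorem not_cover_of_index_five (hq : 2809 < Fintype.card F) {n : ℕ}
    (hn : 1 < n) (hk : Fintype.card F - 1 = (n - 1) * 5) :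
    ¬ ∀ γ : F, ∃ a b : F, a ^ 5 = a ∧ b ^ n = b ∧ a + b = γ := by
  intro h
  set A : Finset F := Finset.univ.filter fun a => a ^ 5 = a with hA
  set B : Finset F := Finset.univ.filter fun a => a ^ n = a with hB
  set H : Finset F := B.erase 0 with hH
  have hAc : A.card ≤ 5 := card_filter_pow_eq_self_le (by norm_num)
  have hBc : B.card ≤ n := card_filter_pow_eq_self_le hn
  have h0B : (0 : F) ∈ B := by simp [hB, (zero_lt_one.trans hn).ne']
  have hHc : H.card + 1 = B.card := Finset.card_erase_add_one h0B
  have hcov : ∀ x, ∃ a ∈ A, ∃ b ∈ B, a + b = x := by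
    intro x
    obtain ⟨a, b, ha, hb, hab⟩ := h x
    exact ⟨a, by simpa [hA] using ha, b, by simpa [hB] using hb, hab⟩
  have hcard := card_add_card_filter_le hcov (by simp [hA]) (by simp [hA])
  have hmono : (H.filter fun x => x + 1 ∈ H).card ≤ (B.filter fun x => x + 1 ∈ B).card := by
    refine Finset.card_le_card fun x hx => ?_
    rw [Finset.mem_filter] at hx ⊢
    exact ⟨Finset.mem_of_mem_erase hx.1, Finset.mem_of_mem_erase hx.2⟩
  have hAB : A.card * B.card ≤ 5 * B.card := Nat.mul_le_mul_right _ hAc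
  have hf : (H.filter fun x => x + 1 ∈ H).card ≤ 4 := by omega
  have hN : Fintype.card F ≤ 5 * H.card + 5 := by omega
  have hmem : ∀ x, x ∈ H ↔ x ≠ 0 ∧ x ^ n = x := by simp [hH, hB]
  have hvinh := sq_card_sq_sub_le (H := H) (by simp [hH]) (Finset.card_pos.1 (by omega))
    (fun x hx y hy => by
      rw [hmem] at hx hy ⊢
      exact ⟨mul_ne_zero hx.1 hy.1, by rw [mul_pow, hx.2, hy.2]⟩)
    (fun x hx => by
      rw [hmem] at hx ⊢
      exact ⟨inv_ne_zero hx.1, by rw [inv_pow, hx.2]⟩)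
  have hf' : ((H.filter fun x => x + 1 ∈ H).card : ℤ) ≤ 4 := by exact_mod_cast hf
  have hN' : (Fintype.card F : ℤ) ≤ 5 * H.card + 5 := by exact_mod_cast hN
  have hq' : (2809 : ℤ) < Fintype.card F := by exact_mod_cast hq
  generalize ((H.filter fun x => x + 1 ∈ H).card : ℤ) = f at *
  generalize (H.card : ℤ) = N at *
  generalize (Fintype.card F : ℤ) = q at *
  have h1 : (q - 5) ^ 2 ≤ (5 * N) ^ 2 := pow_le_pow_left₀ (by linarith) (by linarith) 2
  have h2 : (q - 5) ^ 2 - 100 * q ≤ 25 * (N ^ 2 - q * f) := by nlinarith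
  have h3 : 0 ≤ (q - 5) ^ 2 - 100 * q := by nlinarith
  have h4 : ((q - 5) ^ 2 - 100 * q) ^ 2 ≤ 625 * q ^ 3 := by
    have := pow_le_pow_left₀ h3 h2 2
    nlinarith
  have h5 : (q - 110) * q ≤ (q - 5) ^ 2 - 100 * q := by nlinarith
  have h6 : ((q - 110) * q) ^ 2 ≤ 625 * q ^ 3 :=
    (pow_le_pow_left₀ (mul_nonneg (by linarith) (by linarith)) h5 2).trans h4
  have h7 : (q - 110) ^ 2 ≤ 625 * q := by
    have hq2 : 0 < q ^ 2 := by positivity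
    refine le_of_mul_le_mul_left ?_ hq2
    linarith
  nlinarith

theorem not_cover_of_char_two (hF : ringChar F = 2) (hq : 2809 < Fintype.card F) {n k : ℕ}
    (hn : 1 < n) (hk1 : k ≠ 1) (hk : Fintype.card F - 1 = (n - 1) * k) :
    ¬ ∀ γ : F, ∃ a b : F, a ^ 5 = a ∧ b ^ n = b ∧ a + b = γ := by
  intro h
  have : CharP F 2 := ringChar.of_eq hF
  have hcard := card_le_card_mul_card_of_forall_exists_add (A := ({0, 1} : Finset F))
    (B := Finset.univ.filter fun a => a ^ n = a) fun x => by
      obtain ⟨a, b, ha, hb, hab⟩ := h x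
      refine ⟨a, ?_, b, by simpa using hb, hab⟩
      rw [pow_five_eq_self_iff, CharTwo.neg_eq] at ha
      have : a ^ 2 = 1 → a = 1 := fun h => by
        simpa [CharTwo.neg_eq] using sq_eq_sq_iff_eq_or_eq_neg.1 (h.trans (one_pow 2).symm)
      simp only [Finset.mem_insert, Finset.mem_singleton]
      tauto
  have hB := card_filter_pow_eq_self_le (F := F) hn
  rw [Finset.card_pair zero_ne_one] at hcard
  have heven := FiniteField.even_card_of_char_two hF
  rcases k with _ | _ | _ | k
  · omega
  · omega
  · omega
  · have : (n - 1) * 3 ≤ (n - 1) * (k + 1 + 1 + 1) := Nat.mul_le_mul_left _ (by omega)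
    omega

end Potent

/-- If `q > 2809` is a prime power, then for every `n` with `1 < n < q` and
`(n-1) ∣ (q-1)`, not every element of the finite field with `q` elements is the sum
of a `5`-potent and an `n`-potent. -/
theorem not_sum_of_five_potent_and_n_potent_of_large
    (q : ℕ) (hq : IsPrimePow q) (hq' : 2809 < q)
    (F : Type*) [Field F] [Fintype F] (hF : Fintype.card F = q) :
    ∀ n : ℕ, 1 < n → n < q → (n - 1) ∣ (q - 1) →
      ¬ (∀ γ : F, ∃ a b : F, a ^ 5 = a ∧ b ^ n = b ∧ a + b = γ) := by
  classical
  subst hF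
  rintro n hn hnq ⟨k, hk⟩
  have hk1 : k ≠ 1 := by rintro rfl; omega
  by_cases hF : ringChar F = 2
  · exact not_cover_of_char_two hF hq' hn hk1 hk
  rcases lt_or_ge k 6 with hk6 | hk6
  · interval_cases k
    · omega
    · omega
    · exact not_cover_of_index_even hF hq' (k := 1) hn hk
    · exact not_cover_of_index_three hF hq' hn hk
    · exact not_cover_of_index_even hF hq' (k := 2) hn hk
    · exact not_cover_of_index_five hq' hn hk
  · intro h
    have hcard := card_le_card_mul_card_of_forall_exists_add
      (A := Finset.univ.filter fun a : F => a ^ 5 = a)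
      (B := Finset.univ.filter fun a => a ^ n = a) fun x => by
        obtain ⟨a, b, ha, hb, hab⟩ := h x
        exact ⟨a, by simpa using ha, b, by simpa using hb, hab⟩
    have := Nat.mul_le_mul (card_filter_pow_eq_self_le (F := F) (n := 5) (by norm_num))
      (card_filter_pow_eq_self_le (F := F) hn)
    have : (n - 1) * 6 ≤ (n - 1) * k := Nat.mul_le_mul_left _ hk6
    omega
end

section
/- There are only finitely many pairs (q,n), where q is a prime power and n is an integer with 1 < n < q and (n-1) dividing (q-1), such that every element of the finite field F_q is the sum of a 5-potent element and an n-potent element. -/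
open Polynomial

theorem linearIndependent_of_pow_mem_range {k L E : Type*} [Field k] [Field L] [Algebra k L]
    [IsGalois k L] {d : ℕ} (hd : 0 < d) {ζ : k} (hζ : IsPrimitiveRoot ζ d) (θ : E → L)
    (hθ : ∀ e, θ e ≠ 0) (hpow : ∀ e, ∃ r : k, θ e ^ d = algebraMap k L r)
    (hne : ∀ e e' (r : k), θ e = algebraMap k L r * θ e' → e = e') :
    LinearIndependent k θ := by
  classical
  have : NeZero d := ⟨hd.ne'⟩
  have hχ : ∀ (σ : L ≃ₐ[k] L) (e : E), ∃ c : k, σ (θ e) = algebraMap k L c * θ e := by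
    intro σ e
    obtain ⟨r, hr⟩ := hpow e
    have h1 : (σ (θ e) / θ e) ^ d = 1 := by
      rw [div_pow, ← map_pow, hr, AlgEquiv.commutes, ← hr, div_self (pow_ne_zero _ (hθ e))]
    obtain ⟨i, -, hi⟩ :=
      (hζ.map_of_injective (algebraMap k L).injective).eq_pow_of_pow_eq_one h1
    refine ⟨ζ ^ i, ?_⟩
    rw [map_pow, hi, div_mul_cancel₀ _ (hθ e)]
  choose χ hχ using hχ
  rw [linearIndependent_iff']
  intro s
  induction s using Finset.induction_on with
  | empty => simp
  | insert a s ha ih =>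
    intro c hc
    have key : ∀ e ∈ s, c e = 0 := by
      intro e he
      have hae : a ≠ e := fun h => ha (h ▸ he)
      obtain ⟨σ, hσ⟩ : ∃ σ : L ≃ₐ[k] L, χ σ e ≠ χ σ a := by
        by_contra! hall
        have hfix : ∀ σ : L ≃ₐ[k] L, σ (θ e / θ a) = θ e / θ a := by
          intro σ
          have hca : algebraMap k L (χ σ a) ≠ 0 := by
            intro h0
            have := hχ σ a
            rw [h0, zero_mul] at this
            exact hθ a (by simpa using this)
          rw [map_div₀, hχ, hχ, hall, mul_div_mul_left _ _ hca]
        obtain ⟨r, hr⟩ := (InfiniteGalois.mem_range_algebraMap_iff_fixed (θ e / θ a)).2 hfix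
        exact hae (hne e a r (by rw [hr, div_mul_cancel₀ _ (hθ a)])).symm
      have hsum : ∑ e ∈ s, (c e * (χ σ e - χ σ a)) • θ e = 0 := by
        have h1 := congrArg σ hc
        rw [Finset.sum_insert ha] at h1 hc
        simp only [map_add, map_sum, map_smul, map_zero, hχ] at h1
        have h2 : c a • (algebraMap k L (χ σ a) * θ a) = - ∑ x ∈ s, (χ σ a * c x) • θ x := by
          have := congrArg (fun z => algebraMap k L (χ σ a) * z) hc
          simp only [mul_add, mul_zero, Finset.mul_sum] at this
          rw [mul_smul_comm] at this
          rw [eq_neg_iff_add_eq_zero]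
          rw [← this]
          congr 1
          refine Finset.sum_congr rfl fun x _ => ?_
          simp only [Algebra.smul_def, map_mul]
          ring
        rw [h2, neg_add_eq_zero] at h1
        rw [← sub_eq_zero.2 h1.symm, ← Finset.sum_sub_distrib]
        refine Finset.sum_congr rfl fun x _ => ?_
        simp only [Algebra.smul_def, map_mul, map_sub]
        ring
      have := ih _ hsum e he
      exact (mul_eq_zero.1 this).resolve_right (sub_ne_zero.2 hσ)
    intro e he
    rcases Finset.mem_insert.1 he with rfl | he
    · rw [Finset.sum_insert ha, Finset.sum_eq_zero (fun x hx => by rw [key x hx, zero_smul]),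
        add_zero] at hc
      exact (smul_eq_zero.1 hc).resolve_right (hθ e)
    · exact key e he


theorem count_roots_prod_radicands {K ι : Type*} [Field K] [Fintype ι] [DecidableEq K] {α : ι → K}
    (hα : Function.Injective α) {c : ι → K} (hc : ∀ i, c i ≠ 0) (r : ℕ) (n : ι → ℕ) (i : ι) :
    (∏ j, (C (c j) * (X - C (α j)) ^ r) ^ n j).roots.count (α i) = n i * r := by
  classical
  have h0 : ∏ j, (C (c j) * (X - C (α j)) ^ r) ^ n j ≠ 0 :=
    Finset.prod_ne_zero_iff.2 fun j _ => pow_ne_zero _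
      (mul_ne_zero (C_ne_zero.2 (hc j)) (pow_ne_zero _ (X_sub_C_ne_zero _)))
  rw [roots_prod _ _ h0, Multiset.count_bind]
  have : ∀ j, Multiset.count (α i) ((C (c j) * (X - C (α j)) ^ r) ^ n j).roots =
      if j = i then n i * r else 0 := by
    intro j
    rw [roots_pow, roots_C_mul _ (hc j), roots_pow, roots_X_sub_C, Multiset.count_nsmul,
      Multiset.count_nsmul, Multiset.count_singleton]
    by_cases h : j = i
    · simp [h]
    · simp [h, hα.eq_iff, Ne.symm h]
  simp only [this]
  simp

theorem exists_linearIndependent_radicals {K ι : Type} [Field K] [Fintype ι] [DecidableEq ι] {d : ℕ}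
    (hdK : (d : K) ≠ 0) {ζ : K} (hζ : IsPrimitiveRoot ζ d) {α : ι → K}
    (hα : Function.Injective α) {c : ι → K} (hc : ∀ i, c i ≠ 0) :
    ∃ (L : Type) (_ : Field L) (φ : K[X] →+* L) (θ : ι → L),
      (∀ i, θ i ^ d = φ (C (c i) * (X - C (α i)) ^ (d - 1))) ∧
      ∀ v : (ι → Fin d) → K[X], ∑ e, φ (v e) * ∏ i, θ i ^ (e i : ℕ) = 0 → v = 0 := by
  classical
  have hd : 0 < d := Nat.pos_of_ne_zero (by rintro rfl; simp at hdK)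
  let k := RatFunc K
  let L := SeparableClosure k
  let φ : K[X] →+* L := (algebraMap k L).comp (algebraMap K[X] k)
  have hφ : Function.Injective φ :=
    (algebraMap k L).injective.comp (IsFractionRing.injective K[X] k)
  have hdL : NeZero (d : L) := ⟨by
    have h : φ (C (d : K)) ≠ 0 := (map_ne_zero_iff φ hφ).2 (C_ne_zero.2 hdK)
    simpa using h⟩
  let g : ι → K[X] := fun i => C (c i) * (X - C (α i)) ^ (d - 1)
  have hg : ∀ i, g i ≠ 0 := fun i =>
    mul_ne_zero (C_ne_zero.2 (hc i)) (pow_ne_zero _ (X_sub_C_ne_zero _))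
  have hex : ∀ i, ∃ z : L, z ^ d = φ (g i) := fun i => IsSepClosed.exists_pow_nat_eq _ d
  choose θ hθ using hex
  have hθ0 : ∀ i, θ i ≠ 0 := by
    intro i h
    have := hθ i
    rw [h, zero_pow hd.ne'] at this
    exact hg i ((map_eq_zero_iff φ hφ).1 this.symm)
  have hpow : ∀ e : ι → Fin d, (∏ i, θ i ^ (e i : ℕ)) ^ d = φ (∏ i, g i ^ (e i : ℕ)) := by
    intro e
    rw [← Finset.prod_pow, map_prod]
    refine Finset.prod_congr rfl fun i _ => ?_
    rw [← pow_mul, mul_comm, pow_mul, hθ, map_pow]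
  have hind : LinearIndependent k (fun e : ι → Fin d => ∏ i, θ i ^ (e i : ℕ)) := by
    refine linearIndependent_of_pow_mem_range hd
      (hζ.map_of_injective (f := algebraMap K k) (algebraMap K k).injective) _
      (fun e => Finset.prod_ne_zero_iff.2 fun i _ => pow_ne_zero _ (hθ0 i))
      (fun e => ⟨_, hpow e⟩) ?_
    intro e e' r hr
    have h1 := congrArg (· ^ d) hr
    simp only [mul_pow, hpow] at h1
    obtain ⟨a, b, hb, hab⟩ := IsFractionRing.div_surjective (A := K[X]) r
    have hb0 : b ≠ 0 := nonZeroDivisors.ne_zero hb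
    have hφb : φ b ≠ 0 := (map_ne_zero_iff φ hφ).2 hb0
    have hr' : algebraMap k L r = φ a / φ b := by rw [← hab, map_div₀]; rfl
    have h2 : b ^ d * ∏ i, g i ^ (e i : ℕ) = a ^ d * ∏ i, g i ^ (e' i : ℕ) := by
      apply hφ
      rw [map_mul, h1, hr', map_mul, map_pow, map_pow, div_pow]
      rw [← mul_assoc, mul_div_cancel₀ _ (pow_ne_zero d hφb)]
    have hprod : ∀ e : ι → Fin d, ∏ i, g i ^ (e i : ℕ) ≠ 0 := fun e =>
      Finset.prod_ne_zero_iff.2 fun i _ => pow_ne_zero _ (hg i)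
    have hl : b ^ d * ∏ i, g i ^ (e i : ℕ) ≠ 0 := mul_ne_zero (pow_ne_zero _ hb0) (hprod e)
    have h3 := congrArg Polynomial.roots h2
    rw [roots_mul hl, roots_mul (h2 ▸ hl), roots_pow, roots_pow] at h3
    funext i
    have h4 := congrArg (Multiset.count (α i)) h3
    rw [Multiset.count_add, Multiset.count_add, Multiset.count_nsmul, Multiset.count_nsmul,
      count_roots_prod_radicands hα hc, count_roots_prod_radicands hα hc] at h4
    have h5 : (e i : ℕ) ≡ e' i [MOD d] := by
      rw [Nat.modEq_iff_dvd]
      have h6 : ((d : ℤ) * Multiset.count (α i) b.roots + (e i : ℕ) * (d - 1)) =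
          d * Multiset.count (α i) a.roots + (e' i : ℕ) * (d - 1) := by
        have := congrArg (Nat.cast (R := ℤ)) h4
        push_cast [Nat.cast_sub hd] at this
        exact this
      exact ⟨Multiset.count (α i) a.roots - Multiset.count (α i) b.roots + (e' i : ℕ) - (e i : ℕ),
        by linear_combination h6⟩
    exact Fin.ext (by rwa [Nat.ModEq, Nat.mod_eq_of_lt (e i).2, Nat.mod_eq_of_lt (e' i).2] at h5)
  refine ⟨L, inferInstance, φ, θ, hθ, fun v hv => ?_⟩
  have := Fintype.linearIndependent_iff.1 hind (fun e => algebraMap K[X] k (v e)) (by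
    rw [← hv]
    refine Finset.sum_congr rfl fun e _ => ?_
    rw [Algebra.smul_def]; rfl)
  funext e
  exact (map_eq_zero_iff _ (IsFractionRing.injective K[X] k)).1 (this e)
/-- The matrix of multiplication by `∑ e, P e * ∏ i, θ i ^ e i` in the basis of monomials
`∏ i, θ i ^ e i`, where `θ i ^ d = g i`. -/
noncomputable def radicalMulMatrix {R ι : Type*} [CommRing R] [Fintype ι] {d : ℕ} [NeZero d]
    (g : ι → R) (P : (ι → Fin d) → R) : Matrix (ι → Fin d) (ι → Fin d) R :=
  Matrix.of fun e e' => P (e' - e) * ∏ i, g i ^ ((((e' - e) i : ℕ) + e i) / d)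

theorem radicalMulMatrix_sum {R S ι : Type*} [CommRing R] [CommRing S] [Fintype ι] [DecidableEq ι]
    {d : ℕ} [NeZero d] (g : ι → R) (P : (ι → Fin d) → R) (φ : R →+* S) (θ : ι → S)
    (hθ : ∀ i, θ i ^ d = φ (g i)) (e : ι → Fin d) :
    ∑ e', φ (radicalMulMatrix g P e e') * ∏ i, θ i ^ (e' i : ℕ) =
      (∑ e', φ (P e') * ∏ i, θ i ^ (e' i : ℕ)) * ∏ i, θ i ^ (e i : ℕ) := by
  rw [Finset.sum_mul, ← Equiv.sum_comp (Equiv.addRight e)]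
  refine Finset.sum_congr rfl fun e' _ => ?_
  simp only [radicalMulMatrix, Matrix.of_apply, Equiv.coe_addRight, add_sub_cancel_right, map_mul,
    map_prod, map_pow]
  rw [mul_assoc, mul_assoc, ← Finset.prod_mul_distrib, ← Finset.prod_mul_distrib]
  congr 1
  refine Finset.prod_congr rfl fun i _ => ?_
  rw [Pi.add_apply, Fin.val_add, ← hθ, ← pow_mul, ← pow_add, ← pow_add, Nat.div_add_mod]

theorem radicalMulMatrix_det_ne_zero {R L ι : Type*} [CommRing R] [IsDomain R] [Field L]
    [Fintype ι] [DecidableEq ι] {d : ℕ} [NeZero d] (g : ι → R) (P : (ι → Fin d) → R)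
    (φ : R →+* L) (θ : ι → L) (hθ : ∀ i, θ i ^ d = φ (g i))
    (hind : ∀ v : (ι → Fin d) → R, ∑ e, φ (v e) * ∏ i, θ i ^ (e i : ℕ) = 0 → v = 0)
    (hP : P ≠ 0) : (radicalMulMatrix g P).det ≠ 0 := by
  intro hdet
  obtain ⟨v, hv, hvM⟩ := Matrix.exists_vecMul_eq_zero_iff.2 hdet
  have h1 : (∑ e', φ (P e') * ∏ i, θ i ^ (e' i : ℕ)) *
      ∑ e, φ (v e) * ∏ i, θ i ^ (e i : ℕ) = 0 := by
    calc _ = ∑ e, φ (v e) * ((∑ e', φ (P e') * ∏ i, θ i ^ (e' i : ℕ)) *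
          ∏ i, θ i ^ (e i : ℕ)) := by
          rw [Finset.mul_sum]
          exact Finset.sum_congr rfl fun e _ => by ring
      _ = ∑ e', φ (Matrix.vecMul v (radicalMulMatrix g P) e') * ∏ i, θ i ^ (e' i : ℕ) := by
          simp only [← radicalMulMatrix_sum g P φ θ hθ, Matrix.vecMul, dotProduct, map_sum,
            map_mul, Finset.mul_sum, Finset.sum_mul]
          rw [Finset.sum_comm]
          exact Finset.sum_congr rfl fun e _ => Finset.sum_congr rfl fun e' _ => by ring
      _ = 0 := by simp [hvM]
  rcases mul_eq_zero.1 h1 with h | h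
  · exact hP (hind P h)
  · exact hv (hind v h)

theorem map_radicalMulMatrix_det_eq_zero {R S ι : Type*} [CommRing R] [CommRing S]
    [Fintype ι] [DecidableEq ι] {d : ℕ} [NeZero d] (g : ι → R) (P : (ι → Fin d) → R)
    (φ : R →+* S) (θ : ι → S) (hθ : ∀ i, θ i ^ d = φ (g i))
    (h0 : ∑ e, φ (P e) * ∏ i, θ i ^ (e i : ℕ) = 0) : φ (radicalMulMatrix g P).det = 0 := by
  have h1 : ((radicalMulMatrix g P).map φ).mulVec (fun e => ∏ i, θ i ^ (e i : ℕ)) = 0 := by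
    funext e
    have := radicalMulMatrix_sum g P φ θ hθ e
    rw [h0, zero_mul] at this
    simpa [Matrix.mulVec, dotProduct] using this
  have h2 := congrArg (Matrix.mulVec ((radicalMulMatrix g P).map φ).adjugate) h1
  rw [Matrix.mulVec_mulVec, Matrix.adjugate_mul, Matrix.smul_mulVec, Matrix.one_mulVec,
    Matrix.mulVec_zero] at h2
  have h3 := congrFun h2 0
  rw [RingHom.map_det]
  simpa using h3

theorem natDegree_det_le_of_forall_le {R n : Type*} [CommRing R] [Fintype n] [DecidableEq n]
    (M : Matrix n n R[X]) (D : ℕ) (h : ∀ i j, (M i j).natDegree ≤ D) :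
    M.det.natDegree ≤ Fintype.card n * D := by
  rw [Matrix.det_apply]
  refine natDegree_sum_le_of_forall_le _ _ fun σ _ => (natDegree_smul_le _ _).trans ?_
  refine (natDegree_prod_le _ _).trans ?_
  exact (Finset.sum_le_sum fun i _ => h _ _).trans (by simp)

theorem natDegree_radicalMulMatrix_le {R ι : Type*} [CommRing R] [Fintype ι]
    {d : ℕ} [NeZero d] (g : ι → R[X]) (P : (ι → Fin d) → R[X]) (A b : ℕ)
    (hP : ∀ e, (P e).natDegree ≤ A) (hg : ∀ i, (g i).natDegree ≤ b) (e e' : ι → Fin d) :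
    (radicalMulMatrix g P e e').natDegree ≤ A + Fintype.card ι * b := by
  refine natDegree_mul_le.trans (add_le_add (hP _) ((natDegree_prod_le _ _).trans ?_))
  refine (Finset.sum_le_sum (g := fun _ => b) fun i _ => ?_).trans (by simp)
  refine natDegree_pow_le.trans ?_
  have : (((e' - e) i : ℕ) + e i) / d ≤ 1 := by
    rw [← Nat.lt_succ_iff, Nat.div_lt_iff_lt_mul (NeZero.pos d)]
    have := ((e' - e) i).2
    have := (e i).2
    omega
  calc _ ≤ 1 * b := Nat.mul_le_mul this (hg i)
    _ = b := one_mul b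

theorem eq_zero_of_X_pow_dvd_sum {K ι : Type} [Field K] [Fintype K] [Fintype ι] [DecidableEq ι]
    {d m : ℕ} (hm : m * d + 1 = Fintype.card K) (hdK : (d : K) ≠ 0) {ζ : K}
    (hζ : IsPrimitiveRoot ζ d) {α : ι → K} (hα : Function.Injective α) (hα0 : ∀ i, α i ≠ 0)
    {B : ℕ} (hmB : d ^ Fintype.card ι * (B + Fintype.card ι * d + Fintype.card ι * d) < m)
    (p : (ι → Fin d) → K[X]) (hp : ∀ e, (p e).natDegree ≤ B)
    (hdvd : X ^ m ∣ ∑ e, p e * ∏ i, (X - C (α i)) ^ (m * (e i : ℕ))) : p = 0 := by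
  have hd : d ≠ 0 := by rintro rfl; simp at hdK
  have : NeZero d := ⟨hd⟩
  obtain ⟨L, _, φ, θ, hθ, hind⟩ :=
    exists_linearIndependent_radicals hdK hζ hα (c := fun i => -α i) fun i => neg_ne_zero.2 (hα0 i)
  let g : ι → K[X] := fun i => C (-α i) * (X - C (α i)) ^ (d - 1)
  let r : (ι → Fin d) → K[X] := fun e => ∏ i, (X - C (α i)) ^ (d - 1 - (e i : ℕ))
  let P : (ι → Fin d) → K[X] := fun e => p e * r e
  have hr : ∀ e, r e ≠ 0 := fun e =>
    Finset.prod_ne_zero_iff.2 fun i _ => pow_ne_zero _ (X_sub_C_ne_zero _)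
  by_contra hne
  have hP : P ≠ 0 := by
    intro h
    refine hne (funext fun e => ?_)
    exact (mul_eq_zero.1 (congrFun h e)).resolve_right (hr e)
  have hdet := radicalMulMatrix_det_ne_zero g P φ θ hθ hind hP
  let ψ := Ideal.Quotient.mk (Ideal.span {(X : K[X]) ^ m})
  have hψ : ∀ f, ψ f = 0 ↔ X ^ m ∣ f := fun f => by
    rw [Ideal.Quotient.eq_zero_iff_mem, Ideal.mem_span_singleton]
  have hw : ∀ i, (ψ ((X - C (α i)) ^ (m + 1))) ^ d = ψ (g i) := by
    intro i
    have h1 : ((X - C (α i)) ^ (m + 1)) ^ d =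
        (X ^ Fintype.card K - C (α i)) * (X - C (α i)) ^ (d - 1) := by
      have h2 : (X - C (α i)) ^ Fintype.card K = X ^ Fintype.card K - C (α i) := by
        rw [← FiniteField.expand_card]; simp
      rw [← h2, ← hm, ← pow_mul, ← pow_add]
      congr 1
      have : 1 ≤ d := Nat.one_le_iff_ne_zero.2 hd
      zify [this]; ring
    rw [← map_pow, h1, ← sub_eq_zero, ← map_sub, hψ]
    have h3 : X ^ m ∣ (X : K[X]) ^ Fintype.card K :=
      pow_dvd_pow _ (by rw [← hm]; have := Nat.le_mul_of_pos_right m (Nat.pos_of_ne_zero hd); omega)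
    have h4 : (X ^ Fintype.card K - C (α i)) * (X - C (α i)) ^ (d - 1) - g i =
        X ^ Fintype.card K * (X - C (α i)) ^ (d - 1) := by
      simp only [g, C_neg]; ring
    rw [h4]
    exact h3.mul_right _
  have hsum : ∑ e, ψ (P e) * ∏ i, (ψ ((X - C (α i)) ^ (m + 1))) ^ (e i : ℕ) = 0 := by
    have h1 : ∑ e, P e * ∏ i, ((X - C (α i)) ^ (m + 1)) ^ (e i : ℕ) =
        (∑ e, p e * ∏ i, (X - C (α i)) ^ (m * (e i : ℕ))) * ∏ i, (X - C (α i)) ^ (d - 1) := by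
      rw [Finset.sum_mul]
      refine Finset.sum_congr rfl fun e _ => ?_
      simp only [P, r]
      rw [mul_assoc, mul_assoc, ← Finset.prod_mul_distrib, ← Finset.prod_mul_distrib]
      congr 1
      refine Finset.prod_congr rfl fun i _ => ?_
      rw [← pow_mul, ← pow_add, ← pow_add]
      congr 1
      have := (e i).2
      have h5 : (m + 1) * (e i : ℕ) = m * (e i : ℕ) + e i := by ring
      omega
    have h2 : ψ (∑ e, P e * ∏ i, ((X - C (α i)) ^ (m + 1)) ^ (e i : ℕ)) = 0 := by
      rw [h1, hψ]; exact hdvd.mul_right _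
    simpa only [map_sum, map_mul, map_prod, map_pow] using h2
  have hdvd' := (hψ _).1 (map_radicalMulMatrix_det_eq_zero g P ψ _ hw hsum)
  have h1 := natDegree_le_of_dvd hdvd' hdet
  rw [natDegree_X_pow] at h1
  have hlin : ∀ i k, ((X - C (α i)) ^ k).natDegree ≤ k := fun i k => by
    rw [natDegree_pow, natDegree_X_sub_C, mul_one]
  have h2 := natDegree_det_le_of_forall_le (radicalMulMatrix g P) _
    (natDegree_radicalMulMatrix_le g P (B + Fintype.card ι * d) d (fun e => by
      refine natDegree_mul_le.trans (add_le_add (hp e) ((natDegree_prod_le _ _).trans ?_))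
      refine (Finset.sum_le_sum (g := fun _ => d) fun i _ => (hlin i _).trans ?_).trans (by simp)
      omega)
      (fun i => (natDegree_C_mul_le _ _).trans ((hlin i _).trans (Nat.sub_le _ _))))
  simp only [Fintype.card_fun, Fintype.card_fin] at h2
  omega

theorem eq_zero_of_sum_X_pow_mul_eq_zero {K : Type*} [Field K] (m : ℕ) :
    ∀ {n : ℕ} (s : Fin n → K[X]), ∑ j : Fin n, X ^ (m * (j : ℕ)) * s j = 0 →
      (∀ j, X ^ m ∣ s j → s j = 0) → s = 0
  | 0, _, _, _ => funext fun j => j.elim0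
  | n + 1, s, h, hs => by
    have h1 : s 0 + X ^ m * ∑ j : Fin n, X ^ (m * (j : ℕ)) * s j.succ = 0 := by
      rw [← h, Fin.sum_univ_succ, Finset.mul_sum]
      simp only [Fin.val_zero, mul_zero, pow_zero, one_mul, Fin.val_succ]
      congr 1
      exact Finset.sum_congr rfl fun j _ => by ring
    have h0 : s 0 = 0 := hs 0 ⟨-∑ j : Fin n, X ^ (m * (j : ℕ)) * s j.succ, by
      linear_combination h1⟩
    rw [h0, zero_add] at h1
    have h2 := eq_zero_of_sum_X_pow_mul_eq_zero m (fun j => s j.succ)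
      ((mul_eq_zero.1 h1).resolve_left (pow_ne_zero _ X_ne_zero)) fun j => hs _
    funext j
    refine Fin.cases h0 (fun j => congrFun h2 j) j

theorem X_sub_C_pow_dvd_of_X_pow_dvd_comp {K : Type*} [Field K] {R : K[X]} {x c : K} (hc : c ≠ 0)
    {M : ℕ} (h : X ^ M ∣ R.comp (C x + C c * X)) : (X - C x) ^ M ∣ R := by
  obtain ⟨Q, hQ⟩ := h
  have h1 := congrArg (fun f => f.comp (C c⁻¹ * (X - C x))) hQ
  have h2 : (C x + C c * X).comp (C c⁻¹ * (X - C x)) = X := by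
    simp only [add_comp, mul_comp, C_comp, X_comp]
    rw [← mul_assoc, ← C_mul, mul_inv_cancel₀ hc]
    simp
  simp only [comp_assoc, h2, comp_X, mul_comp, pow_comp, X_comp, mul_pow] at h1
  exact ⟨C c⁻¹ ^ M * Q.comp (C c⁻¹ * (X - C x)), by rw [h1]; ring⟩

theorem mul_card_le_natDegree {K : Type*} [Field K] {R : K[X]} (hR : R ≠ 0) {M : ℕ} (S : Finset K)
    (h : ∀ x ∈ S, (X - C x) ^ M ∣ R) : M * S.card ≤ R.natDegree := by
  have h1 : ∏ x ∈ S, (X - C x) ^ M ∣ R := Finset.prod_dvd_of_coprime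
    (fun x _ y _ hxy => (pairwise_coprime_X_sub_C Function.injective_id hxy).pow) h
  refine le_trans (le_of_eq ?_) (natDegree_le_of_dvd h1 hR)
  rw [natDegree_prod _ _ fun x _ => pow_ne_zero _ (X_sub_C_ne_zero _)]
  simp [mul_comm]

/-- The coefficient of `S ^ k` has degree at most `c + N * k`. -/
def HasSlopeDegreeLE {R : Type*} [CommRing R] (N c : ℕ) (F : R[X][X]) : Prop :=
  ∀ k, (F.coeff k).natDegree ≤ c + N * k

namespace HasSlopeDegreeLE

variable {R : Type*} [CommRing R] {N c c' : ℕ} {F G : R[X][X]}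

theorem mul (hF : HasSlopeDegreeLE N c F) (hG : HasSlopeDegreeLE N c' G) :
    HasSlopeDegreeLE N (c + c') (F * G) := by
  intro k
  rw [coeff_mul]
  refine natDegree_sum_le_of_forall_le _ _ fun ij hij => ?_
  rw [Finset.HasAntidiagonal.mem_antidiagonal] at hij
  refine natDegree_mul_le.trans ((add_le_add (hF _) (hG _)).trans ?_)
  rw [← hij]
  exact le_of_eq (by ring)

theorem add (hF : HasSlopeDegreeLE N c F) (hG : HasSlopeDegreeLE N c G) :
    HasSlopeDegreeLE N c (F + G) := fun k => by
  rw [coeff_add]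
  exact natDegree_add_le_of_degree_le (hF k) (hG k)

theorem mono (hF : HasSlopeDegreeLE N c F) (h : c ≤ c') : HasSlopeDegreeLE N c' F := fun k =>
  (hF k).trans (by gcongr)

theorem of_C {f : R[X]} (hf : f.natDegree ≤ c) : HasSlopeDegreeLE N c (C f) := fun k => by
  rw [coeff_C]
  split_ifs
  · exact hf.trans (Nat.le_add_right _ _)
  · simp

theorem C_mul_X {f : R[X]} (hf : f.natDegree ≤ N) : HasSlopeDegreeLE N 0 (C f * X) := fun k => by
  rw [coeff_C_mul_X]
  split_ifs with h
  · simpa [h] using hf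
  · simp

theorem pow (hF : HasSlopeDegreeLE N c F) (n : ℕ) : HasSlopeDegreeLE N (n * c) (F ^ n) := by
  induction n with
  | zero => simpa using of_C (N := N) (c := 0) (f := (1 : R[X])) (by simp)
  | succ n ih => rw [pow_succ, add_mul, one_mul]; exact ih.mul hF

theorem prod {κ : Type*} (s : Finset κ) {F : κ → R[X][X]}
    (hF : ∀ i ∈ s, HasSlopeDegreeLE N 0 (F i)) : HasSlopeDegreeLE N 0 (∏ i ∈ s, F i) := by
  classical
  induction s using Finset.induction_on with
  | empty => simpa using of_C (N := N) (c := 0) (f := (1 : R[X])) (by simp)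
  | insert a s ha ih =>
    rw [Finset.prod_insert ha]
    exact (hF a (Finset.mem_insert_self _ _)).mul
      (ih fun i hi => hF i (Finset.mem_insert_of_mem hi))

theorem sum {κ : Type*} (s : Finset κ) {F : κ → R[X][X]}
    (hF : ∀ i ∈ s, HasSlopeDegreeLE N c (F i)) : HasSlopeDegreeLE N c (∑ i ∈ s, F i) := fun k => by
  rw [finsetSum_coeff]
  exact natDegree_sum_le_of_forall_le _ _ fun i hi => hF i hi k

theorem aeval {p : R[X]} {B : ℕ} (hp : p.natDegree ≤ B) (hF : HasSlopeDegreeLE N 1 F) :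
    HasSlopeDegreeLE N B (Polynomial.aeval F p) := by
  rw [aeval_eq_sum_range]
  refine sum _ fun i hi => ?_
  rw [Algebra.smul_def]
  have h1 : HasSlopeDegreeLE N 0 (algebraMap R R[X][X] (p.coeff i)) :=
    of_C (f := C (p.coeff i)) (by simp)
  refine (h1.mul (hF.pow i)).mono ?_
  have := Finset.mem_range.1 hi
  omega

end HasSlopeDegreeLE

theorem exists_ne_zero_forall_coeff_eq_zero {K τ σ : Type*} [Field K] [Fintype τ] [Fintype σ]
    {B D : ℕ} (hcard : Fintype.card σ * D < Fintype.card τ * B)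
    (Λ : σ → (τ → K[X]) →ₗ[K] K[X]) :
    ∃ p : τ → K[X], p ≠ 0 ∧ (∀ t, (p t).natDegree ≤ B) ∧
      ∀ s, ∀ j < D, (Λ s p).coeff j = 0 := by
  let ι : (τ → degreeLT K B) →ₗ[K] (τ → K[X]) :=
    LinearMap.pi fun t => (degreeLT K B).subtype ∘ₗ LinearMap.proj t
  let F : (τ → degreeLT K B) →ₗ[K] (σ × Fin D → K) :=
    LinearMap.pi fun s => lcoeff K s.2 ∘ₗ Λ s.1 ∘ₗ ι
  have : Module.Finite K (degreeLT K B) := Module.Finite.equiv (degreeLTEquiv K B).symm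
  have hB : Module.finrank K (degreeLT K B) = B := by
    rw [(degreeLTEquiv K B).finrank_eq, Module.finrank_fin_fun]
  have hker := LinearMap.ker_ne_bot_of_finrank_lt (f := F) (by
    rw [Module.finrank_fintype_fun_eq_card, Module.finrank_pi_fintype]
    simpa [hB] using hcard)
  obtain ⟨v, hv, hv0⟩ := (Submodule.ne_bot_iff _).1 hker
  refine ⟨ι v, fun h => hv0 (funext fun t => Subtype.ext (congrFun h t)), fun t => ?_, ?_⟩
  · exact natDegree_le_of_degree_le (mem_degreeLT.1 (v t).2).le
  · intro s j hj
    exact congrFun (LinearMap.mem_ker.1 hv) (s, ⟨j, hj⟩)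

theorem X_sub_C_eq_comp {K κ : Type*} [Field K] [Fintype κ] [DecidableEq κ] (a : κ → K) (k : κ)
    (x : K) : (X - C (a k)).comp (C x + C (∏ l, (x - a l)) * X) =
      C (x - a k) * (1 + C (∏ l ∈ Finset.univ.erase k, (x - a l)) * X) := by
  rw [← Finset.mul_prod_erase _ _ (Finset.mem_univ k)]
  simp only [sub_comp, X_comp, C_comp, C_mul, C_sub]
  ring

/-- The polynomial method of Stepanov: if the vectors `((x - a k) ^ m)ₖ` take few values, then some
combination of the functions `∏ k, (X - a k) ^ (m * ex t k)` with coefficients of low degree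
vanishes to high order at every `x` outside of `a`. -/
theorem exists_high_order_vanishing {K κ τ : Type*} [Field K] [Fintype κ] [DecidableEq κ]
    [Fintype τ] (m : ℕ) (a : κ → K) (ex : τ → κ → ℕ) (T : Finset (κ → K))
    (hT : ∀ x, (∀ k, x ≠ a k) → (fun k => (x - a k) ^ m) ∈ T) {B M : ℕ}
    (hcard : T.card * M * (B + Fintype.card κ * M + 1) < Fintype.card τ * B) :
    ∃ p : τ → K[X], p ≠ 0 ∧ (∀ t, (p t).natDegree ≤ B) ∧
      ∀ x, (∀ k, x ≠ a k) →
        (X - C x) ^ M ∣ ∑ t, p t * ∏ k, (X - C (a k)) ^ (m * ex t k) := by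
  let u : K[X][X] := C X + C (∏ k, (X - C (a k))) * X
  let G : κ → K[X] := fun k => ∏ l ∈ Finset.univ.erase k, (X - C (a l))
  let Ψ : τ → K[X][X] := fun t => ∏ k, (1 + C (G k) * X) ^ (m * ex t k)
  let Λ : T × Fin M → (τ → K[X]) →ₗ[K] K[X] := fun s =>
    ∑ t, (∏ k, s.1.1 k ^ ex t k) • ((lcoeff K[X] s.2).restrictScalars K ∘ₗ
      LinearMap.mulRight K (Ψ t) ∘ₗ (aeval u).toLinearMap ∘ₗ LinearMap.proj t)
  have hΛ : ∀ s p, Λ s p = ∑ t, C (∏ k, s.1.1 k ^ ex t k) * (aeval u (p t) * Ψ t).coeff s.2 := by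
    intro s p
    simp [Λ, LinearMap.sum_apply, smul_eq_C_mul]
  obtain ⟨p, hp0, hpB, hp⟩ := exists_ne_zero_forall_coeff_eq_zero
    (D := B + Fintype.card κ * M + 1) (by simpa using hcard) Λ
  refine ⟨p, hp0, hpB, fun x hx => ?_⟩
  have hG : ∀ k, (G k).natDegree ≤ Fintype.card κ := fun k => by
    refine (natDegree_prod_le _ _).trans ?_
    simp only [natDegree_X_sub_C, Finset.sum_const, smul_eq_mul, mul_one]
    exact Finset.card_le_univ _
  have hu : HasSlopeDegreeLE (Fintype.card κ) 1 u :=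
    (HasSlopeDegreeLE.of_C natDegree_X_le).add ((HasSlopeDegreeLE.C_mul_X (by
      refine (natDegree_prod_le _ _).trans ?_
      simp)).mono zero_le_one)
  have hΨ : ∀ t, HasSlopeDegreeLE (Fintype.card κ) 0 (Ψ t) := fun t =>
    HasSlopeDegreeLE.prod _ fun k _ => ((((HasSlopeDegreeLE.of_C (c := 0) (f := (1 : K[X]))
      (by simp)).add (HasSlopeDegreeLE.C_mul_X (hG k))).pow _).mono (by simp))
  have hzero : ∀ s, Λ s p = 0 := by
    intro s
    ext j
    by_cases hj : j < B + Fintype.card κ * M + 1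
    · rw [hp s j hj, coeff_zero]
    · refine coeff_eq_zero_of_natDegree_lt (lt_of_le_of_lt ?_ (not_lt.1 hj))
      rw [hΛ]
      refine natDegree_sum_le_of_forall_le (n := B + Fintype.card κ * M) _ _ fun t _ => ?_
      refine (natDegree_C_mul_le _ _).trans ?_
      refine (((HasSlopeDegreeLE.aeval (hpB t) hu).mul (hΨ t)) s.2).trans ?_
      rw [add_zero]
      gcongr
      exact s.2.2.le
  refine X_sub_C_pow_dvd_of_X_pow_dvd_comp (c := ∏ k, (x - a k))
    (Finset.prod_ne_zero_iff.2 fun k _ => sub_ne_zero.2 (hx k)) ?_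
  rw [X_pow_dvd_iff]
  intro i hi
  let ev : K[X][X] →+* K[X] := mapRingHom (evalRingHom x)
  have hev_u : ∀ q : K[X], ev (aeval u q) = q.comp (C x + C (∏ k, (x - a k)) * X) := by
    intro q
    induction q using Polynomial.induction_on' with
    | add f g hf hg => rw [map_add, map_add, hf, hg, add_comp]
    | monomial n c =>
      rw [aeval_monomial, monomial_comp, map_mul, map_pow]
      simp [ev, u, Polynomial.map_prod]
  have hcomp : (∑ t, p t * ∏ k, (X - C (a k)) ^ (m * ex t k)).comp
      (C x + C (∏ k, (x - a k)) * X) =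
      ∑ t, C (∏ k, ((x - a k) ^ m) ^ ex t k) * ev (aeval u (p t) * Ψ t) := by
    rw [Polynomial.sum_comp]
    refine Finset.sum_congr rfl fun t _ => ?_
    rw [mul_comp, prod_comp, map_mul, hev_u]
    simp only [pow_comp, X_sub_C_eq_comp, mul_pow, Finset.prod_mul_distrib]
    have h1 : ev (Ψ t) = ∏ k, (1 + C (∏ l ∈ Finset.univ.erase k, (x - a l)) * X) ^ (m * ex t k) := by
      simp [ev, Ψ, G, Polynomial.map_prod]
    rw [h1]
    simp only [map_prod, map_pow, ← pow_mul]
    ring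
  have h2 := congrArg (eval x) (hzero (⟨_, hT x hx⟩, ⟨i, hi⟩))
  rw [hΛ, eval_finsetSum, eval_zero] at h2
  rw [hcomp, finsetSum_coeff, ← h2]
  refine Finset.sum_congr rfl fun t _ => ?_
  rw [coeff_C_mul, eval_mul, eval_C]
  simp only [ev, coe_mapRingHom, coeff_map, coe_evalRingHom]

theorem FiniteField.exists_isPrimitiveRoot_of_mul_add_one_eq_card {K : Type*} [Field K] [Fintype K]
    {m d : ℕ} (hm : m * d + 1 = Fintype.card K) : ∃ ζ : K, IsPrimitiveRoot ζ d := by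
  obtain ⟨g, hg⟩ := IsCyclic.exists_ofOrder_eq_natCard (α := Kˣ)
  rw [Nat.card_units, Nat.card_eq_fintype_card, ← hm, Nat.add_sub_cancel] at hg
  have h1 : IsPrimitiveRoot (g : K) (m * d) :=
    (hg ▸ IsPrimitiveRoot.orderOf g).map_of_injective (f := Units.coeHom K) Units.val_injective
  refine ⟨_, h1.pow ?_ rfl⟩
  have := Fintype.one_lt_card (α := K)
  omega

theorem stepanov_dimension_count {d D N J M B t : ℕ}
    (hJ : J = d * D * (N + 1)) (hM : M = J + N + 1) (hB : B = d * D * M * ((N + 1) * M + 1))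
    (ht : t + 1 ≤ d * D) : t * M * (B + (N + 1) * M + 1) < D * (d * J) * B := by
  have h1 : t * (N + 1) + (N + 1) ≤ J := by
    rw [hJ]; nlinarith
  have h2 : (t + 1) * J ≤ D * (d * J) := by
    calc (t + 1) * J ≤ d * D * J := Nat.mul_le_mul_right _ ht
      _ = D * (d * J) := by ring
  have h3 : t * M + 1 ≤ D * (d * J) := by
    refine le_trans ?_ h2
    rw [hM]; nlinarith
  have h4 : t * M * ((N + 1) * M + 1) < B := by
    rw [hB]
    have hM0 : 0 < M := by omega
    have : t < d * D := by omega
    gcongr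
  calc t * M * (B + (N + 1) * M + 1) = t * M * B + t * M * ((N + 1) * M + 1) := by ring
    _ < t * M * B + B := by omega
    _ = (t * M + 1) * B := by ring
    _ ≤ D * (d * J) * B := Nat.mul_le_mul_right _ h3

/-- Over a large finite field, the `d`-th power residue symbols of `x` and of the `x - α i` can be
prescribed simultaneously. -/
theorem exists_forall_sub_pow_eq (d N : ℕ) : ∃ Q : ℕ, ∀ (K : Type) [Field K] [Fintype K]
    (ι : Type) [Fintype ι] [DecidableEq ι] (m : ℕ), m * d + 1 = Fintype.card K →
    Q < Fintype.card K → Fintype.card ι = N → ∀ α : ι → K, Function.Injective α →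
    (∀ i, α i ≠ 0) → ∀ π : Option ι → K, (∀ k, π k ^ d = 1) →
    ∃ x : K, x ^ m = π none ∧ ∀ i, (x - α i) ^ m = π (some i) := by
  classical
  let D := d ^ N
  let J := d * D * (N + 1)
  let M := J + N + 1
  let B := d * D * M * ((N + 1) * M + 1)
  refine ⟨d * (D * (B + N * d + N * d) + 1) + B + M * (N + 1), ?_⟩
  intro K _ _ ι _ _ m hm hQ hN α hα hα0 π hπ
  have hdK : (d : K) ≠ 0 := by
    intro h
    have := congrArg (Nat.cast (R := K)) hm
    rw [FiniteField.cast_card_eq_zero] at this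
    simp [h] at this
  have hd : 0 < d := Nat.pos_of_ne_zero (by rintro rfl; simp at hdK)
  obtain ⟨ζ, hζ⟩ := FiniteField.exists_isPrimitiveRoot_of_mul_add_one_eq_card hm
  by_contra! hx
  let a : Option ι → K := fun k => k.elim 0 α
  let ex : (ι → Fin d) × Fin (d * J) → Option ι → ℕ := fun t k => k.elim t.2 fun i => t.1 i
  let T : Finset (Option ι → K) :=
    (Fintype.piFinset fun _ : Option ι => nthRootsFinset d (1 : K)).erase π
  have hTcard : T.card + 1 ≤ d * D := by
    have hmem : π ∈ Fintype.piFinset fun _ : Option ι => nthRootsFinset d (1 : K) :=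
      Fintype.mem_piFinset.2 fun k => (mem_nthRootsFinset hd _).2 (hπ k)
    rw [Finset.card_erase_add_one hmem, Fintype.card_piFinset, Finset.prod_const,
      Finset.card_univ, hζ.card_nthRootsFinset,
      Fintype.card_option, hN, pow_succ']
  have hT : ∀ x, (∀ k, x ≠ a k) → (fun k => (x - a k) ^ m) ∈ T := by
    intro x hxa
    refine Finset.mem_erase.2 ⟨fun h => ?_, Fintype.mem_piFinset.2 fun k =>
      (mem_nthRootsFinset hd _).2 ?_⟩
    · obtain ⟨i, hi⟩ := hx x (by simpa [a] using congrFun h none)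
      exact hi (congrFun h (some i))
    · rw [← pow_mul, show m * d = Fintype.card K - 1 by omega]
      exact FiniteField.pow_card_sub_one_eq_one _ (sub_ne_zero.2 (hxa k))
  obtain ⟨p, hp0, hpB, hp⟩ := exists_high_order_vanishing m a ex T hT (B := B) (M := M) (by
    rw [Fintype.card_prod, Fintype.card_fun, Fintype.card_fin, Fintype.card_fin, hN,
      Fintype.card_option, hN]
    exact stepanov_dimension_count rfl rfl rfl hTcard)
  set R := ∑ t, p t * ∏ k, (X - C (a k)) ^ (m * ex t k) with hR
  have hmlarge : D * (B + N * d + N * d) < m := by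
    have : d * (D * (B + N * d + N * d) + 1) ≤ d * m := by
      rw [mul_comm d m]; omega
    exact Nat.le_of_mul_le_mul_left this hd
  have hR0 : R ≠ 0 := by
    intro h0
    have h1 : ∑ j : Fin (d * J), X ^ (m * (j : ℕ)) *
        ∑ e : ι → Fin d, p (e, j) * ∏ i, (X - C (α i)) ^ (m * (e i : ℕ)) = 0 := by
      rw [← h0, hR, Fintype.sum_prod_type_right]
      refine Finset.sum_congr rfl fun j _ => ?_
      rw [Finset.mul_sum]
      refine Finset.sum_congr rfl fun e _ => ?_
      rw [Fintype.prod_option]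
      simp only [a, ex, Option.elim, map_zero, sub_zero]
      ring
    have h2 : ∀ j : Fin (d * J),
        X ^ m ∣ ∑ e : ι → Fin d, p (e, j) * ∏ i, (X - C (α i)) ^ (m * (e i : ℕ)) →
        (fun e => p (e, j)) = 0 := fun j hj =>
      eq_zero_of_X_pow_dvd_sum hm hdK hζ hα hα0 (B := B) (by rwa [hN]) _ (fun e => hpB _) hj
    have h3 := eq_zero_of_sum_X_pow_mul_eq_zero m _ h1 fun j hj => by
      have := h2 j hj
      exact Finset.sum_eq_zero fun e _ => by rw [congrFun this e, Pi.zero_apply, zero_mul]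
    refine hp0 (funext fun ⟨e, j⟩ => ?_)
    exact congrFun (h2 j (by rw [congrFun h3 j]; exact dvd_zero _)) e
  have hdeg : R.natDegree ≤ B + m * (d * (J + N)) := by
    refine natDegree_sum_le_of_forall_le _ _ fun t _ => ?_
    refine natDegree_mul_le.trans (add_le_add (hpB t) ((natDegree_prod_le _ _).trans ?_))
    simp only [natDegree_pow, natDegree_X_sub_C, mul_one]
    rw [← Finset.mul_sum, Fintype.sum_option]
    refine Nat.mul_le_mul_left _ ?_
    have h1 : ∑ i, ex t (some i) ≤ N * d := by
      refine (Finset.sum_le_sum (g := fun _ => d) fun i _ => (t.1 i).2.le).trans ?_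
      simp [hN]
    have h2 : ex t none ≤ d * J := t.2.2.le
    linarith
  have hcount := mul_card_le_natDegree hR0 (M := M) (Finset.univ \ Finset.univ.image a)
    fun x hx => hp x fun k h => by
      rw [Finset.mem_sdiff] at hx
      exact hx.2 (Finset.mem_image.2 ⟨k, Finset.mem_univ _, h.symm⟩)
  have hcard : Fintype.card K ≤ (Finset.univ \ Finset.univ.image a).card + (N + 1) := by
    have h1 := Finset.le_card_sdiff (Finset.univ.image a) (Finset.univ : Finset K)
    have h2 : (Finset.univ.image a).card ≤ N + 1 := by
      refine Finset.card_image_le.trans ?_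
      rw [Finset.card_univ, Fintype.card_option, hN]
    rw [Finset.card_univ] at h1
    omega
  have h1 : m * (d * (J + N)) + (J + N) + 1 + (m * d) = M * Fintype.card K := by
    rw [← hm]; simp only [M]; ring
  have h2 := Nat.mul_le_mul_left M hcard
  rw [mul_add] at h2
  have : Fintype.card K ≤ B + M * (N + 1) := by omega
  omega

theorem card_le_of_forall_sum_of_five_potent_and_n_potent : ∃ Q : ℕ, ∀ (F : Type) [Field F]
    [Fintype F] (n : ℕ), 1 < n → n < Fintype.card F → (n - 1) ∣ (Fintype.card F - 1) →
    (∀ γ : F, ∃ a b : F, a ^ 5 = a ∧ b ^ n = b ∧ a + b = γ) → Fintype.card F ≤ Q := by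
  classical
  choose Q hQ using exists_forall_sub_pow_eq
  refine ⟨25 + ∑ d ∈ Finset.range 6, ∑ N ∈ Finset.range 5, Q d N, ?_⟩
  intro F _ _ n hn1 hnq ⟨d, hd⟩ h
  have hq := Fintype.one_lt_card (α := F)
  obtain ⟨m, rfl⟩ : ∃ m, n = m + 1 := ⟨n - 1, by omega⟩
  rw [Nat.add_sub_cancel] at hd
  have hm : m * d + 1 = Fintype.card F := by omega
  have hpot : ∀ k : ℕ, 1 < k → (Finset.univ.filter fun x : F => x ^ k = x).card ≤ k := by
    intro k hk
    refine (Finset.card_le_card (t := (X ^ k - X : F[X]).roots.toFinset) fun x hx => ?_).trans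
      ((Multiset.toFinset_card_le _).trans ((card_roots' _).trans ?_))
    · rw [Multiset.mem_toFinset, mem_roots (FiniteField.X_pow_card_sub_X_ne_zero F hk)]
      simpa [sub_eq_zero] using hx
    · rw [FiniteField.X_pow_card_sub_X_natDegree_eq F hk]
  have hle : Fintype.card F ≤ 5 * (m + 1) := by
    have h1 : (Finset.univ : Finset F) ⊆ ((Finset.univ.filter fun x : F => x ^ 5 = x) ×ˢ
        (Finset.univ.filter fun x : F => x ^ (m + 1) = x)).image fun z => z.1 + z.2 := by
      intro γ _
      obtain ⟨a, b, ha, hb, hab⟩ := h γ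
      exact Finset.mem_image.2 ⟨(a, b), by simp [ha, hb], hab⟩
    refine (Finset.card_le_card h1).trans (Finset.card_image_le.trans ?_)
    rw [Finset.card_product]
    exact Nat.mul_le_mul (hpot 5 (by norm_num)) (hpot _ hn1)
  by_contra! hlt
  have hd6 : d < 6 := by
    by_contra! h6
    have := Nat.mul_le_mul_left m h6
    omega
  have hd1 : 1 < d := by
    by_contra! h1
    have := Nat.mul_le_mul_left m h1
    omega
  let ι := {x : F // x ^ 4 = 1}
  have hN : Fintype.card ι < 5 := by
    have h1 : Fintype.card ι ≤ (nthRootsFinset 4 (1 : F)).card := by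
      rw [Fintype.card_subtype]
      exact Finset.card_le_card fun x hx => (mem_nthRootsFinset (by norm_num) _).2 (by simpa using hx)
    have h2 : (nthRootsFinset 4 (1 : F)).card ≤ 4 :=
      (Multiset.toFinset_card_le _).trans (card_nthRoots _ _)
    omega
  have hQlt : Q d (Fintype.card ι) < Fintype.card F := by
    have h1 := Finset.single_le_sum (f := fun N => Q d N) (fun _ _ => Nat.zero_le _)
      (Finset.mem_range.2 hN)
    have h2 := Finset.single_le_sum (f := fun d => ∑ N ∈ Finset.range 5, Q d N)
      (fun _ _ => Nat.zero_le _) (Finset.mem_range.2 hd6)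
    omega
  obtain ⟨ζ, hζ⟩ := FiniteField.exists_isPrimitiveRoot_of_mul_add_one_eq_card hm
  have hζ1 : ζ ≠ 1 := hζ.ne_one hd1
  have hζ0 : ζ ≠ 0 := hζ.ne_zero (by omega)
  obtain ⟨x, hx0, hx⟩ := hQ d _ F ι m hm hQlt rfl Subtype.val Subtype.val_injective
    (fun i hi => by have := i.2; rw [hi] at this; norm_num at this) (fun _ => ζ)
    fun _ => hζ.pow_eq_one
  obtain ⟨a, b, ha, hb, hab⟩ := h x
  have hbm : b ^ m = ζ := by
    rw [show b = x - a by rw [← hab]; ring]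
    by_cases ha0 : a = 0
    · rw [ha0, sub_zero, hx0]
    · refine hx ⟨a, mul_right_cancel₀ ha0 ?_⟩
      rw [one_mul, ← pow_succ, ha]
  have hb0 : b ≠ 0 := by
    rintro rfl
    rw [zero_pow (by omega)] at hbm
    exact hζ0 hbm.symm
  rw [pow_succ, hbm] at hb
  exact hζ1 (mul_right_cancel₀ hb0 (by rw [hb, one_mul]))

theorem finite_pairs_sum_of_five_potent_and_n_potent :
    {p : ℕ × ℕ | IsPrimePow p.1 ∧ 1 < p.2 ∧ p.2 < p.1 ∧ (p.2 - 1) ∣ (p.1 - 1) ∧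
      ∀ (F : Type) [Field F] [Fintype F], Fintype.card F = p.1 →
        ∀ γ : F, ∃ a b : F, a ^ 5 = a ∧ b ^ p.2 = b ∧ a + b = γ}.Finite := by
  obtain ⟨Q, hQ⟩ := card_le_of_forall_sum_of_five_potent_and_n_potent
  refine (Set.finite_Iic (Q, Q)).subset ?_
  rintro ⟨q, n⟩ ⟨hq, hn1, hnq, hdvd, h⟩
  simp only at hq hn1 hnq hdvd h
  obtain ⟨p, k, hp, hk, hpk⟩ := (isPrimePow_nat_iff q).1 hq
  have : Fact p.Prime := ⟨hp⟩
  have := Fintype.ofFinite (GaloisField p k)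
  have hcard : Fintype.card (GaloisField p k) = q := by
    rw [← Nat.card_eq_fintype_card, GaloisField.card p k hk.ne', hpk]
  have hle := hQ (GaloisField p k) n hn1 (by rwa [hcard]) (by rwa [hcard]) (h _ hcard)
  rw [hcard] at hle
  exact ⟨hle, hnq.le.trans hle⟩
end
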